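/- arXiv:2312.04725 — 3 statements merged into one kernel-verified Lean document; each statement's English description precedes it below -/
import Mathlib

section
/- Let d be a complex number with Re(d) > 0, let s ∈ ℂ with s not a positive integer, and let u ∈ ℂ ∖ (-∞, 0] with |u| sufficiently small (depending on d). Then e^{-du} φ(e^{-u}, s, d) = Γ(1-s) u^{s-1} + Σ_{k=0}^∞ ((-u)^k / k!) ζ(s - k, d), where the series converges absolutely. -/
/-!
Subtracting the principal part at `0` from `e^{-dz} / (1 - e^{-z})` leaves the kernel
`k(z) = e^{-dz} / (1 - e^{-z}) - e^{-z} / z`, holomorphic in the strip `|Im z| < 2π` and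
exponentially decaying to the right. For `Re w > 0` and `x > 0` the Mellin transform at `w` of
`t ↦ k^{(N)}(t + x)` is `(-1)^N Γ(w)` times the difference of the Lerch series and the exponential
integral `E` of order `w - N`; at `x = 0` it is `(-1)^N Γ(w) (ζ(w - N, d) - 1 / (w - N - 1))`.
With `w = s + N`, the Taylor expansion of `k^{(N)}(t + x)` in powers of `x`, valid for `|x| < 2π`,
therefore expands `∑ e^{-(n+d)x} (n+d)^{-s} - E_s(x)` in terms of `ζ(s - k, d) - 1 / (s - k - 1)`.
The expansion of `E_s(x)` itself contributes `Γ(1-s) x^{s-1}` and cancels the poles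
`1 / (s - k - 1)`. The identity theorem carries the result from `0 < x < 2π` to the slit disc.
-/

open MeasureTheory Set Filter Topology

namespace Erdelyi

section Gamma

lemma integrableOn_rpow_mul_exp_neg_mul {σ c : ℝ} (hσ : 0 < σ) (hc : 0 < c) :
    IntegrableOn (fun t : ℝ ↦ t ^ (σ - 1) * Real.exp (-c * t)) (Ioi 0) := by
  simpa using integrableOn_rpow_mul_exp_neg_mul_rpow (p := 1) (s := σ - 1) (b := c)
    (by linarith) one_pos hc

lemma continuousOn_ofReal_cpow_const (w : ℂ) :
    ContinuousOn (fun t : ℝ ↦ (t : ℂ) ^ w) (Ioi 0) := fun t ht ↦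
  (Complex.continuousAt_ofReal_cpow_const t w (Or.inr (ne_of_gt ht))).continuousWithinAt

lemma norm_cpow_smul_le_of_norm_le_exp {w : ℂ} {c C t : ℝ} {z : ℂ} (ht : 0 < t)
    (hz : ‖z‖ ≤ C * Real.exp (-c * t)) :
    ‖(t : ℂ) ^ (w - 1) • z‖ ≤ C * (t ^ (w.re - 1) * Real.exp (-c * t)) := by
  rw [norm_smul, Complex.norm_cpow_eq_rpow_re_of_pos ht, Complex.sub_re, Complex.one_re]
  calc t ^ (w.re - 1) * ‖z‖ ≤ t ^ (w.re - 1) * (C * Real.exp (-c * t)) := by gcongr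
    _ = C * (t ^ (w.re - 1) * Real.exp (-c * t)) := by ring

lemma mellinConvergent_of_norm_le_exp {w : ℂ} {c C : ℝ} {f : ℝ → ℂ} (hw : 0 < w.re) (hc : 0 < c)
    (hf : ContinuousOn f (Ioi 0)) (hb : ∀ t > 0, ‖f t‖ ≤ C * Real.exp (-c * t)) :
    MellinConvergent f w := by
  refine ((integrableOn_rpow_mul_exp_neg_mul hw hc).const_mul C).mono'
    (((continuousOn_ofReal_cpow_const _).smul hf).aestronglyMeasurable measurableSet_Ioi) ?_
  filter_upwards [ae_restrict_mem measurableSet_Ioi] with t ht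
  exact norm_cpow_smul_le_of_norm_le_exp ht (hb t ht)

lemma integral_norm_cpow_smul_le_of_norm_le_exp {w : ℂ} {c C : ℝ} {f : ℝ → ℂ} (hw : 0 < w.re)
    (hc : 0 < c) (hb : ∀ t > 0, ‖f t‖ ≤ C * Real.exp (-c * t)) :
    ∫ t in Ioi (0 : ℝ), ‖(t : ℂ) ^ (w - 1) • f t‖ ≤
      C * ∫ t in Ioi (0 : ℝ), t ^ (w.re - 1) * Real.exp (-c * t) := by
  rw [← integral_const_mul]
  refine integral_mono_of_nonneg (Eventually.of_forall fun t ↦ norm_nonneg _)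
    ((integrableOn_rpow_mul_exp_neg_mul hw hc).const_mul C) ?_
  filter_upwards [ae_restrict_mem measurableSet_Ioi] with t ht
  exact norm_cpow_smul_le_of_norm_le_exp ht (hb t ht)

lemma norm_cexp_neg_mul_ofReal (r : ℂ) (t : ℝ) :
    ‖Complex.exp (-r * t)‖ = Real.exp (-r.re * t) := by
  simp [Complex.norm_exp]

lemma mellinConvergent_cexp_neg_mul {w r : ℂ} (hw : 0 < w.re) (hr : 0 < r.re) :
    MellinConvergent (fun t : ℝ ↦ Complex.exp (-r * t)) w :=
  mellinConvergent_of_norm_le_exp (C := 1) hw hr (by fun_prop)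
    fun t _ ↦ by rw [norm_cexp_neg_mul_ofReal, one_mul]

lemma integral_norm_cpow_mul_cexp {w r : ℂ} (hw : 0 < w.re) (hr : 0 < r.re) :
    ∫ t in Ioi (0 : ℝ), ‖(t : ℂ) ^ (w - 1) * Complex.exp (-r * t)‖ =
      (1 / r.re) ^ w.re * Real.Gamma w.re := by
  rw [← Real.integral_rpow_mul_exp_neg_mul_Ioi hw hr]
  refine setIntegral_congr_fun measurableSet_Ioi fun t (ht : 0 < t) ↦ ?_
  simp only [norm_mul, norm_cexp_neg_mul_ofReal, Complex.norm_cpow_eq_rpow_re_of_pos ht,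
    Complex.sub_re, Complex.one_re, ← neg_mul]

lemma hasDerivAt_integral_mul_cexp {α : Type*} [MeasurableSpace α] {ν : Measure α}
    {b r : α → ℂ} {z : ℂ} {ε : ℝ} (hb : AEStronglyMeasurable b ν) (hr : AEStronglyMeasurable r ν)
    (hε : 0 < ε) (hint : Integrable (fun a ↦ b a * Complex.exp (-r a * z)) ν)
    (hbound : Integrable (fun a ↦ ‖b a‖ * ‖r a‖ * Real.exp (-(r a * z).re + ε * ‖r a‖)) ν) :
    HasDerivAt (fun z ↦ ∫ a, b a * Complex.exp (-r a * z) ∂ν)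
      (∫ a, b a * (Complex.exp (-r a * z) * -r a) ∂ν) z := by
  have hexp (y : ℂ) : AEStronglyMeasurable (fun a ↦ Complex.exp (-r a * y)) ν :=
    Complex.continuous_exp.comp_aestronglyMeasurable (hr.neg.mul_const y)
  refine (hasDerivAt_integral_of_dominated_loc_of_deriv_le
    (F' := fun y a ↦ b a * (Complex.exp (-r a * y) * -r a)) (Metric.ball_mem_nhds z hε)
    (Eventually.of_forall fun y ↦ hb.mul (hexp y)) hint (hb.mul ((hexp z).mul hr.neg))
    (Eventually.of_forall fun a y hy ↦ ?_) hbound (Eventually.of_forall fun a y _ ↦ ?_)).2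
  · have hre : (-r a * y).re ≤ -(r a * z).re + ε * ‖r a‖ := by
      have h : ‖r a * (y - z)‖ ≤ ε * ‖r a‖ := by
        rw [norm_mul, mul_comm]
        gcongr
        exact (mem_ball_iff_norm.1 hy).le
      have := (abs_le.1 ((Complex.abs_re_le_norm _).trans h)).1
      rw [mul_sub, Complex.sub_re] at this
      rw [neg_mul, Complex.neg_re]
      linarith
    rw [norm_mul, norm_mul, Complex.norm_exp, norm_neg, mul_comm (Real.exp _), ← mul_assoc]
    gcongr
  · simpa using (((hasDerivAt_id y).const_mul (-r a)).cexp).const_mul (b a)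

lemma differentiableAt_mellin_cexp_neg_mul {w r : ℂ} (hw : 0 < w.re) (hr : 0 < r.re) :
    DifferentiableAt ℂ (fun r ↦ mellin (fun t : ℝ ↦ Complex.exp (-r * t)) w) r := by
  have h := hasDerivAt_integral_mul_cexp (ν := volume.restrict (Ioi 0)) (z := r) (ε := r.re / 2)
    (b := fun t : ℝ ↦ (t : ℂ) ^ (w - 1)) (r := fun t : ℝ ↦ (t : ℂ))
    ((continuousOn_ofReal_cpow_const _).aestronglyMeasurable measurableSet_Ioi)
    (by fun_prop) (by positivity) ?_ ?_
  · refine h.differentiableAt.congr_of_eventuallyEq (Eventually.of_forall fun y ↦ ?_)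
    simp only [mellin, smul_eq_mul, neg_mul, mul_comm y]
  · have := mellinConvergent_cexp_neg_mul hw hr
    simpa only [MellinConvergent, IntegrableOn, smul_eq_mul, neg_mul, mul_comm r] using this
  · refine (integrableOn_rpow_mul_exp_neg_mul (σ := w.re + 1) (c := r.re / 2) (by linarith)
      (by linarith)).congr_fun (fun t (ht : 0 < t) ↦ ?_) measurableSet_Ioi
    simp only [Complex.norm_cpow_eq_rpow_re_of_pos ht, Complex.sub_re, Complex.one_re,
      Complex.norm_of_nonneg ht.le, Complex.re_ofReal_mul, add_sub_cancel_right]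
    rw [← Real.rpow_add_one ht.ne', sub_add_cancel]
    congr 2
    ring

lemma frequently_ofReal_nhdsNE {x : ℝ} {p : ℂ → Prop} (h : ∀ᶠ y : ℝ in 𝓝 x, p y) :
    ∃ᶠ z : ℂ in 𝓝[≠] (x : ℂ), p z := by
  have ht : Tendsto (fun y : ℝ ↦ (y : ℂ)) (𝓝[≠] x) (𝓝[≠] (x : ℂ)) :=
    Complex.continuous_ofReal.continuousAt.continuousWithinAt.tendsto_nhdsWithin
      fun y hy ↦ by simpa using hy
  exact ht.frequently (h.filter_mono nhdsWithin_le_nhds).frequently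

lemma mellin_cexp_neg_mul {w r : ℂ} (hw : 0 < w.re) (hr : 0 < r.re) :
    mellin (fun t : ℝ ↦ Complex.exp (-r * t)) w = r ^ (-w) * Complex.Gamma w := by
  have hopen : IsOpen {r : ℂ | 0 < r.re} := isOpen_lt continuous_const Complex.continuous_re
  have hmellin : AnalyticOnNhd ℂ (fun r ↦ mellin (fun t : ℝ ↦ Complex.exp (-r * t)) w)
      {r : ℂ | 0 < r.re} :=
    DifferentiableOn.analyticOnNhd
      (fun r hr ↦ (differentiableAt_mellin_cexp_neg_mul hw hr).differentiableWithinAt) hopen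
  have hgamma : AnalyticOnNhd ℂ (fun r : ℂ ↦ r ^ (-w) * Complex.Gamma w) {r : ℂ | 0 < r.re} :=
    DifferentiableOn.analyticOnNhd (fun r hr ↦ ((differentiableAt_id.cpow_const
      (Or.inl hr)).mul_const _).differentiableWithinAt) hopen
  refine hmellin.eqOn_of_preconnected_of_frequently_eq hgamma
    (convex_halfSpace_re_gt 0).isPreconnected (z₀ := ((1 : ℝ) : ℂ)) (by simp) ?_ hr
  refine frequently_ofReal_nhdsNE ?_
  filter_upwards [lt_mem_nhds one_pos] with y hy
  have harg : (y : ℂ).arg ≠ Real.pi := by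
    rw [Complex.arg_ofReal_of_nonneg hy.le]
    exact Real.pi_pos.ne
  simp only [mellin, smul_eq_mul, neg_mul]
  rw [Complex.integral_cpow_mul_exp_neg_mul_Ioi hw hy, one_div, Complex.inv_cpow _ _ harg,
    Complex.cpow_neg]

end Gamma

section LaplaceDirichlet

lemma exists_rpow_le_mul_exp (σ : ℝ) {c ε : ℝ} (hc : 0 < c) (hε : 0 < ε) :
    ∃ C, ∀ y ≥ c, y ^ σ ≤ C * Real.exp (ε * y) := by
  refine ⟨c ^ σ * (⌈σ⌉₊.factorial / (ε * c) ^ ⌈σ⌉₊), fun y hy ↦ ?_⟩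
  have hy0 : 0 < y := hc.trans_le hy
  calc y ^ σ = c ^ σ * (y / c) ^ σ := by
        rw [← Real.mul_rpow hc.le (by positivity), mul_div_cancel₀ _ hc.ne']
    _ ≤ c ^ σ * (y / c) ^ (⌈σ⌉₊ : ℝ) := by
        gcongr
        · exact (one_le_div hc).2 hy
        · exact Nat.le_ceil σ
    _ = c ^ σ * (⌈σ⌉₊.factorial / (ε * c) ^ ⌈σ⌉₊ * ((ε * y) ^ ⌈σ⌉₊ / ⌈σ⌉₊.factorial)) := by
        rw [Real.rpow_natCast, div_pow, mul_pow, mul_pow]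
        field_simp
    _ ≤ c ^ σ * (⌈σ⌉₊.factorial / (ε * c) ^ ⌈σ⌉₊ * Real.exp (ε * y)) := by
        gcongr
        exact Real.pow_div_factorial_le_exp _ (by positivity) _
    _ = _ := by ring

lemma norm_cpow_le_rpow_norm_mul_exp (z w : ℂ) :
    ‖z ^ w‖ ≤ ‖z‖ ^ w.re * Real.exp (Real.pi * |w.im|) := by
  refine (Complex.norm_cpow_le z w).trans ?_
  rw [div_eq_mul_inv, ← Real.exp_neg]
  gcongr
  calc -(z.arg * w.im) ≤ |z.arg * w.im| := neg_le_abs _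
    _ = |z.arg| * |w.im| := abs_mul _ _
    _ ≤ Real.pi * |w.im| := by gcongr; exact Complex.abs_arg_le_pi z

variable {α : Type*} [MeasurableSpace α]

/-- A family of frequencies `r` weighted by `ν` for which the generalized Dirichlet series
`∫ r(a)^{-s} ∂ν(a)` makes sense after exponential damping: the frequencies lie in a sector around
the positive axis, stay away from `0`, and `∫ exp (-x‖r a‖) ∂ν` converges for `x > 0`. -/
structure IsDirichletFrequency (ν : Measure α) (r : α → ℂ) : Prop where
  measurable : Measurable r
  exists_sector : ∃ δ > 0, ∀ᵐ a ∂ν, δ * ‖r a‖ ≤ (r a).re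
  exists_norm_ge : ∃ c > 0, ∀ᵐ a ∂ν, c ≤ ‖r a‖
  integrable_exp : ∀ x > 0, Integrable (fun a ↦ Real.exp (-x * ‖r a‖)) ν

/-- The damped generalized Dirichlet series `∫ r(a)^{-s} exp (-r(a) x) ∂ν(a)`. Counting measure on
`n ↦ n + d` gives the Lerch series and Lebesgue measure on `(1, ∞)` the exponential integral. -/
noncomputable def laplaceDirichlet (ν : Measure α) (r : α → ℂ) (s : ℂ) (x : ℝ) : ℂ :=
  ∫ a, r a ^ (-s) * Complex.exp (-r a * x) ∂ν

namespace IsDirichletFrequency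

variable {ν : Measure α} {r : α → ℂ} (h : IsDirichletFrequency ν r)
include h

lemma ae_re_pos : ∀ᵐ a ∂ν, 0 < (r a).re := by
  obtain ⟨δ, hδ, hsector⟩ := h.exists_sector
  obtain ⟨c, hc, hnorm⟩ := h.exists_norm_ge
  filter_upwards [hsector, hnorm] with a hsector hnorm
  exact (mul_pos hδ (hc.trans_le hnorm)).trans_le hsector

lemma integrable_rpow_norm_mul_exp (σ : ℝ) {x : ℝ} (hx : 0 < x) :
    Integrable (fun a ↦ ‖r a‖ ^ σ * Real.exp (-x * ‖r a‖)) ν := by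
  obtain ⟨c, hc, hnorm⟩ := h.exists_norm_ge
  obtain ⟨C, hC⟩ := exists_rpow_le_mul_exp σ hc (half_pos hx)
  have := h.measurable
  refine ((h.integrable_exp _ (half_pos hx)).const_mul C).mono' (by fun_prop) ?_
  filter_upwards [hnorm] with a ha
  rw [Real.norm_of_nonneg (by positivity)]
  calc ‖r a‖ ^ σ * Real.exp (-x * ‖r a‖)
      ≤ C * Real.exp (x / 2 * ‖r a‖) * Real.exp (-x * ‖r a‖) := by gcongr; exact hC _ ha
    _ = C * Real.exp (-(x / 2) * ‖r a‖) := by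
        rw [mul_assoc, ← Real.exp_add]
        ring_nf

lemma integrable_cpow_mul_cexp (w : ℂ) {x : ℝ} (hx : 0 < x) :
    Integrable (fun a ↦ r a ^ w * Complex.exp (-r a * x)) ν := by
  obtain ⟨δ, hδ, hsector⟩ := h.exists_sector
  have := h.measurable
  refine ((h.integrable_rpow_norm_mul_exp w.re (mul_pos hδ hx)).const_mul
    (Real.exp (Real.pi * |w.im|))).mono' (by fun_prop) ?_
  filter_upwards [hsector] with a ha
  rw [norm_mul, norm_cexp_neg_mul_ofReal]
  calc ‖r a ^ w‖ * Real.exp (-(r a).re * x)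
      ≤ ‖r a‖ ^ w.re * Real.exp (Real.pi * |w.im|) * Real.exp (-(δ * x) * ‖r a‖) := by
        gcongr ?_ * ?_
        · exact norm_cpow_le_rpow_norm_mul_exp _ _
        · exact Real.exp_le_exp.2 (by linarith [mul_le_mul_of_nonneg_right ha hx.le])
    _ = _ := by ring

lemma hasDerivAt_laplaceDirichlet (s : ℂ) {x : ℝ} (hx : 0 < x) :
    HasDerivAt (laplaceDirichlet ν r s) (-laplaceDirichlet ν r (s - 1) x) x := by
  obtain ⟨δ, hδ, hsector⟩ := h.exists_sector
  have hmeas := h.measurable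
  have hbound : Integrable (fun a ↦
      ‖r a ^ (-s)‖ * ‖r a‖ * Real.exp (-(r a * x).re + δ * x / 2 * ‖r a‖)) ν := by
    refine ((h.integrable_rpow_norm_mul_exp ((-s).re + 1) (half_pos (mul_pos hδ hx))).const_mul
      (Real.exp (Real.pi * |(-s).im|))).mono' (by fun_prop) ?_
    filter_upwards [hsector, h.ae_re_pos] with a ha hpos
    have hnorm : 0 < ‖r a‖ := norm_pos_iff.2 fun h0 ↦ by simp [h0] at hpos
    rw [Real.norm_of_nonneg (by positivity), Real.rpow_add_one hnorm.ne']
    calc ‖r a ^ (-s)‖ * ‖r a‖ * Real.exp (-(r a * x).re + δ * x / 2 * ‖r a‖)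
        ≤ ‖r a‖ ^ (-s).re * Real.exp (Real.pi * |(-s).im|) * ‖r a‖ *
            Real.exp (-(δ * x / 2) * ‖r a‖) := by
          gcongr
          · exact norm_cpow_le_rpow_norm_mul_exp _ _
          · rw [Complex.re_mul_ofReal]
            linarith [mul_le_mul_of_nonneg_right ha hx.le]
      _ = _ := by ring
  convert! (hasDerivAt_integral_mul_cexp (z := x) (hmeas.pow_const _).aestronglyMeasurable
    hmeas.aestronglyMeasurable (half_pos (mul_pos hδ hx))
    (h.integrable_cpow_mul_cexp (-s) hx) hbound).comp_ofReal using 1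
  rw [laplaceDirichlet, ← integral_neg]
  refine integral_congr_ae ?_
  filter_upwards [h.ae_re_pos] with a hpos
  have h0 : r a ≠ 0 := fun h0 ↦ by simp [h0] at hpos
  rw [neg_sub, sub_eq_neg_add, Complex.cpow_add _ _ h0, Complex.cpow_one]
  ring

lemma exists_integral_norm_le (s x : ℂ) {w : ℂ} (hw : 0 < w.re) :
    ∃ C, ∀ᵐ a ∂ν, ∫ t in Ioi (0 : ℝ), ‖(t : ℂ) ^ (w - 1) *
      (r a ^ (-s) * Complex.exp (-r a * (t + x)))‖ ≤
        C * ‖r a ^ (-(s + w)) * Complex.exp (-r a * x)‖ := by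
  obtain ⟨δ, hδ, hsector⟩ := h.exists_sector
  refine ⟨(1 / δ) ^ w.re * Real.exp (Real.pi * |w.im|) * Real.Gamma w.re, ?_⟩
  filter_upwards [hsector, h.ae_re_pos] with a ha hpos
  have h0 : r a ≠ 0 := fun h0 ↦ by simp [h0] at hpos
  have hnorm : 0 < ‖r a‖ := norm_pos_iff.2 h0
  have hinner (t : ℝ) : ‖(t : ℂ) ^ (w - 1) * (r a ^ (-s) * Complex.exp (-r a * (t + x)))‖ =
      ‖(t : ℂ) ^ (w - 1) * Complex.exp (-r a * t)‖ * (‖r a ^ (-s)‖ * ‖Complex.exp (-r a * x)‖) := by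
    simp only [mul_add, Complex.exp_add, norm_mul]
    ring
  have hcpow : ‖r a ^ (-s)‖ ≤
      ‖r a ^ (-(s + w))‖ * (‖r a‖ ^ w.re * Real.exp (Real.pi * |w.im|)) := by
    rw [show -s = -(s + w) + w by ring, Complex.cpow_add _ _ h0, norm_mul]
    gcongr
    exact norm_cpow_le_rpow_norm_mul_exp _ _
  have hre : (1 / (r a).re) ^ w.re * ‖r a‖ ^ w.re ≤ (1 / δ) ^ w.re := by
    rw [← Real.mul_rpow (by positivity) hnorm.le]
    gcongr
    rw [one_div, one_div, inv_mul_le_iff₀ hpos, ← div_eq_mul_inv, le_div_iff₀ hδ, mul_comm]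
    exact ha
  simp only [hinner, integral_mul_const, integral_norm_cpow_mul_cexp hw hpos]
  rw [norm_mul (r a ^ (-(s + w)))]
  have := (Real.Gamma_pos_of_pos hw).le
  calc (1 / (r a).re) ^ w.re * Real.Gamma w.re * (‖r a ^ (-s)‖ * ‖Complex.exp (-r a * x)‖)
      ≤ (1 / (r a).re) ^ w.re * Real.Gamma w.re * (‖r a ^ (-(s + w))‖ *
          (‖r a‖ ^ w.re * Real.exp (Real.pi * |w.im|)) * ‖Complex.exp (-r a * x)‖) := by gcongr
    _ = (1 / (r a).re) ^ w.re * ‖r a‖ ^ w.re * Real.exp (Real.pi * |w.im|) * Real.Gamma w.re *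
          (‖r a ^ (-(s + w))‖ * ‖Complex.exp (-r a * x)‖) := by ring
    _ ≤ _ := by gcongr

lemma integrable_prod_mellin [SFinite ν] (s : ℂ) {w : ℂ} (hw : 0 < w.re) {x : ℝ}
    (hint : Integrable (fun a ↦ r a ^ (-(s + w)) * Complex.exp (-r a * x)) ν) :
    Integrable (fun p : ℝ × α ↦ (p.1 : ℂ) ^ (w - 1) *
      (r p.2 ^ (-s) * Complex.exp (-r p.2 * (p.1 + x)))) ((volume.restrict (Ioi 0)).prod ν) := by
  have hmeas := h.measurable
  refine (integrable_prod_iff' (by fun_prop)).2 ⟨?_, ?_⟩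
  · filter_upwards [h.ae_re_pos] with a ha
    refine ((mellinConvergent_cexp_neg_mul hw ha).mul_const
      (r a ^ (-s) * Complex.exp (-r a * x))).congr (Eventually.of_forall fun t ↦ ?_)
    simp only [mul_add, Complex.exp_add, smul_eq_mul]
    ring
  · obtain ⟨C, hC⟩ := h.exists_integral_norm_le s x hw
    refine (hint.norm.const_mul C).mono' ?_ ?_
    · exact (StronglyMeasurable.integral_prod_left'
        (f := fun p : ℝ × α ↦ ‖(p.1 : ℂ) ^ (w - 1) *
          (r p.2 ^ (-s) * Complex.exp (-r p.2 * (p.1 + x)))‖)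
        (Measurable.stronglyMeasurable (by fun_prop))).aestronglyMeasurable
    · filter_upwards [hC] with a ha
      rwa [Real.norm_of_nonneg (integral_nonneg fun _ ↦ norm_nonneg _)]

lemma hasMellin_laplaceDirichlet_comp_add [SFinite ν] (s : ℂ) {w : ℂ} (hw : 0 < w.re) {x : ℝ}
    (hint : Integrable (fun a ↦ r a ^ (-(s + w)) * Complex.exp (-r a * x)) ν) :
    HasMellin (fun t ↦ laplaceDirichlet ν r s (t + x)) w
      (Complex.Gamma w * laplaceDirichlet ν r (s + w) x) := by
  have hprod := h.integrable_prod_mellin s hw hint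
  constructor
  · refine hprod.integral_prod_left.congr (Eventually.of_forall fun t ↦ ?_)
    simp only [laplaceDirichlet, smul_eq_mul, ← integral_const_mul, Complex.ofReal_add]
  · simp only [mellin, laplaceDirichlet, smul_eq_mul, ← integral_const_mul, Complex.ofReal_add]
    rw [integral_integral_swap hprod]
    refine integral_congr_ae ?_
    filter_upwards [h.ae_re_pos] with a ha
    have h0 : r a ≠ 0 := fun h0 ↦ by simp [h0] at ha
    calc ∫ t in Ioi (0 : ℝ), (t : ℂ) ^ (w - 1) * (r a ^ (-s) * Complex.exp (-r a * (t + x)))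
        = mellin (fun t : ℝ ↦ Complex.exp (-r a * t)) w *
            (r a ^ (-s) * Complex.exp (-r a * x)) := by
          rw [mellin, ← integral_mul_const]
          refine integral_congr_ae (Eventually.of_forall fun t ↦ ?_)
          simp only [mul_add, Complex.exp_add, smul_eq_mul]
          ring
      _ = Complex.Gamma w * (r a ^ (-(s + w)) * Complex.exp (-r a * x)) := by
          rw [mellin_cexp_neg_mul hw ha, neg_add, Complex.cpow_add _ _ h0]
          ring

end IsDirichletFrequency

end LaplaceDirichlet

section Families

/-- The series `∑ (n + d)^{-s} exp (-(n + d) x)`, that is `e^{-d x} φ(e^{-x}, s, d)`. -/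
noncomputable abbrev lerchSeries (d : ℂ) : ℂ → ℝ → ℂ :=
  laplaceDirichlet Measure.count fun n : ℕ ↦ (n : ℂ) + d

/-- The generalized exponential integral `E_s(x) = ∫_1^∞ y^{-s} e^{-xy} dy`. -/
noncomputable abbrev expIntegral : ℂ → ℝ → ℂ :=
  laplaceDirichlet (volume.restrict (Ioi (1 : ℝ))) fun y ↦ (y : ℂ)

lemma isDirichletFrequency_natCast_add {d : ℂ} (hd : 0 < d.re) :
    IsDirichletFrequency Measure.count fun n : ℕ ↦ (n : ℂ) + d where
  measurable := measurable_of_countable _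
  exists_sector := by
    refine ⟨d.re / (d.re + |d.im|), by positivity, Eventually.of_forall fun n ↦ ?_⟩
    rw [div_mul_eq_mul_div, div_le_iff₀ (by positivity)]
    have hnorm := Complex.norm_le_abs_re_add_abs_im ((n : ℂ) + d)
    simp only [Complex.add_re, Complex.natCast_re, Complex.add_im, Complex.natCast_im,
      zero_add] at hnorm ⊢
    rw [abs_of_pos (by positivity)] at hnorm
    calc d.re * ‖(n : ℂ) + d‖ ≤ d.re * (n + d.re + |d.im|) := by gcongr
      _ ≤ (n + d.re) * (d.re + |d.im|) := by
          linarith [mul_nonneg n.cast_nonneg (abs_nonneg d.im)]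
  exists_norm_ge := ⟨d.re, hd, Eventually.of_forall fun n ↦
    le_trans (by simp) (Complex.re_le_norm ((n : ℂ) + d))⟩
  integrable_exp x hx := by
    refine integrable_count_iff.2 (Summable.of_nonneg_of_le (fun n ↦ norm_nonneg _) (fun n ↦ ?_)
      (Real.summable_exp_nat_mul_iff.2 (neg_lt_zero.2 hx)))
    have hn : (n : ℝ) ≤ ‖(n : ℂ) + d‖ :=
      le_trans (by simpa using hd.le) (Complex.re_le_norm ((n : ℂ) + d))
    rw [Real.norm_of_nonneg (Real.exp_pos _).le]
    exact Real.exp_le_exp.2 (by linarith [mul_le_mul_of_nonneg_left hn hx.le])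

lemma isDirichletFrequency_ofReal :
    IsDirichletFrequency (volume.restrict (Ioi (1 : ℝ))) fun y ↦ (y : ℂ) where
  measurable := Complex.measurable_ofReal
  exists_sector := by
    refine ⟨1, one_pos, ?_⟩
    filter_upwards [ae_restrict_mem measurableSet_Ioi] with y (hy : 1 < y)
    simp [abs_of_pos (one_pos.trans hy)]
  exists_norm_ge := by
    refine ⟨1, one_pos, ?_⟩
    filter_upwards [ae_restrict_mem measurableSet_Ioi] with y (hy : 1 < y)
    simpa [abs_of_pos (one_pos.trans hy)] using hy.le
  integrable_exp x hx := by
    refine (integrableOn_exp_mul_Ioi (neg_lt_zero.2 hx) 1).congr_fun (fun y (hy : 1 < y) ↦ ?_)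
      measurableSet_Ioi
    simp [abs_of_pos (one_pos.trans hy)]

lemma integrable_natCast_add_cpow_neg {d w : ℂ} (hd : 0 < d.re) (hw : 1 < w.re) :
    Integrable (fun n : ℕ ↦ ((n : ℂ) + d) ^ (-w)) Measure.count := by
  refine integrable_count_iff.2 (Summable.of_nonneg_of_le (fun n ↦ norm_nonneg _) (fun n ↦ ?_)
    (((Real.summable_one_div_nat_add_rpow d.re w.re).2 hw).mul_left
      (Real.exp (Real.pi * |(-w).im|))))
  have hre : 0 < (n : ℝ) + d.re := by positivity
  have hnorm : (n : ℝ) + d.re ≤ ‖(n : ℂ) + d‖ :=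
    le_trans (by simp) (Complex.re_le_norm ((n : ℂ) + d))
  calc ‖((n : ℂ) + d) ^ (-w)‖
      ≤ ‖(n : ℂ) + d‖ ^ (-w).re * Real.exp (Real.pi * |(-w).im|) :=
        norm_cpow_le_rpow_norm_mul_exp _ _
    _ ≤ (n + d.re) ^ (-w).re * Real.exp (Real.pi * |(-w).im|) := by
        gcongr ?_ * _
        exact Real.rpow_le_rpow_of_nonpos hre hnorm (by rw [Complex.neg_re]; linarith)
    _ = Real.exp (Real.pi * |(-w).im|) * (1 / |n + d.re| ^ w.re) := by
        rw [Complex.neg_re, Real.rpow_neg hre.le, abs_of_pos hre, one_div, mul_comm]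

lemma lerchSeries_zero {d : ℂ} (hd : 0 < d.re) {w : ℂ} (hw : 1 < w.re) :
    lerchSeries d w 0 = ∑' n : ℕ, ((n : ℂ) + d) ^ (-w) := by
  simp [laplaceDirichlet, integral_countable (integrable_natCast_add_cpow_neg hd hw)]

lemma lerchSeries_eq_tsum {d : ℂ} (hd : 0 < d.re) (s : ℂ) {x : ℝ} (hx : 0 < x) :
    lerchSeries d s x = ∑' n : ℕ, Complex.exp (-((n : ℂ) + d) * x) * ((n : ℂ) + d) ^ (-s) := by
  rw [lerchSeries, laplaceDirichlet,
    integral_countable ((isDirichletFrequency_natCast_add hd).integrable_cpow_mul_cexp (-s) hx)]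
  simp [mul_comm]

lemma expIntegral_zero {w : ℂ} (hw : 1 < w.re) : expIntegral w 0 = 1 / (w - 1) := by
  have h := integral_Ioi_cpow_of_lt (a := -w) (c := 1) (by simpa using hw) one_pos
  simp only [laplaceDirichlet, Complex.ofReal_zero, mul_zero, Complex.exp_zero, mul_one]
  rw [h, Complex.ofReal_one, Complex.one_cpow, neg_div, ← div_neg, neg_add, neg_neg,
    ← sub_eq_add_neg]

lemma lerchSeries_order_zero {d : ℂ} (hd : 0 < d.re) {x : ℝ} (hx : 0 < x) :
    lerchSeries d 0 x = Complex.exp (-d * x) / (1 - Complex.exp (-x)) := by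
  have hnorm : ‖Complex.exp (-x)‖ < 1 := by
    simpa [Complex.norm_exp] using hx
  rw [lerchSeries_eq_tsum hd 0 hx, div_eq_mul_inv, ← tsum_geometric_of_norm_lt_one hnorm,
    ← tsum_mul_left]
  refine tsum_congr fun n ↦ ?_
  rw [neg_zero, Complex.cpow_zero, mul_one, ← Complex.exp_nat_mul, ← Complex.exp_add]
  ring_nf

lemma expIntegral_order_zero {x : ℝ} (hx : 0 < x) :
    expIntegral 0 x = Complex.exp (-x) / x := by
  have h := integral_exp_mul_complex_Ioi (a := -(x : ℂ)) (by simpa using hx) 1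
  simp only [laplaceDirichlet, neg_zero, Complex.cpow_zero, one_mul]
  simpa [mul_comm, neg_div_neg_eq] using h

end Families

section Kernel

/-- The open strip around the real axis that reaches up to the poles `± 2πi` of
`1 / (1 - exp (-z))`. -/
def strip : Set ℂ := {z | |z.im| < 2 * Real.pi}

/-- The entire function `(1 - exp (-z)) / z`, with value `1` at `0`. -/
noncomputable def expQuotient : ℂ → ℂ := dslope (fun z ↦ 1 - Complex.exp (-z)) 0

/-- The function `exp (-d z) / (1 - exp (-z)) - exp (-z) / z`, continued holomorphically through
`z = 0`. On the positive axis its derivatives are differences of Lerch series and exponential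
integrals of nonpositive integer order. -/
noncomputable def kernel (d : ℂ) : ℂ → ℂ :=
  dslope (fun z ↦ Complex.exp (-d * z) / expQuotient z - Complex.exp (-z)) 0

lemma isOpen_strip : IsOpen strip :=
  isOpen_lt (continuous_abs.comp Complex.continuous_im) continuous_const

lemma ofReal_mem_strip (t : ℝ) : (t : ℂ) ∈ strip := by
  simp [strip, Real.pi_pos]

lemma strip_mem_nhds_zero : strip ∈ 𝓝 (0 : ℂ) :=
  isOpen_strip.mem_nhds (by simpa using ofReal_mem_strip 0)

lemma ball_subset_strip (t : ℝ) : Metric.ball (t : ℂ) (2 * Real.pi) ⊆ strip := fun z hz ↦ by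
  simpa [strip] using (Complex.abs_im_le_norm (z - t)).trans_lt (mem_ball_iff_norm.1 hz)

lemma expQuotient_zero : expQuotient 0 = 1 := by
  have h : HasDerivAt (fun z : ℂ ↦ 1 - Complex.exp (-z)) 1 0 := by
    simpa using ((hasDerivAt_id (0 : ℂ)).neg.cexp).const_sub 1
  rw [expQuotient, dslope_same, h.deriv]

lemma expQuotient_of_ne {z : ℂ} (hz : z ≠ 0) : expQuotient z = (1 - Complex.exp (-z)) / z := by
  simp [expQuotient, dslope_of_ne _ hz, slope_def_field]

lemma one_sub_exp_neg_ne_zero {z : ℂ} (hz : z ∈ strip) (h0 : z ≠ 0) :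
    1 - Complex.exp (-z) ≠ 0 := fun h ↦ by
  obtain ⟨n, hn⟩ := Complex.exp_eq_one_iff.1 (sub_eq_zero.1 h).symm
  have hn0 : n ≠ 0 := by
    rintro rfl
    exact h0 (by simpa using hn)
  have him : -z.im = n * (2 * Real.pi) := by simpa using congrArg Complex.im hn
  have hlt : |(n : ℝ)| * (2 * Real.pi) < 2 * Real.pi := by
    rw [← abs_of_pos Real.two_pi_pos, ← abs_mul, abs_of_pos Real.two_pi_pos, ← him, abs_neg]
    exact hz
  have hone : (1 : ℝ) ≤ |(n : ℝ)| := by exact_mod_cast Int.one_le_abs hn0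
  exact hlt.not_ge (le_mul_of_one_le_left Real.two_pi_pos.le hone)

lemma expQuotient_ne_zero {z : ℂ} (hz : z ∈ strip) : expQuotient z ≠ 0 := by
  rcases eq_or_ne z 0 with rfl | h0
  · simp [expQuotient_zero]
  · rw [expQuotient_of_ne h0]
    exact div_ne_zero (one_sub_exp_neg_ne_zero hz h0) h0

lemma kernel_of_ne (d : ℂ) {z : ℂ} (hz : z ≠ 0) :
    kernel d z = Complex.exp (-d * z) / (1 - Complex.exp (-z)) - Complex.exp (-z) / z := by
  rw [kernel, dslope_of_ne _ hz, slope_def_field, expQuotient_zero, expQuotient_of_ne hz]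
  simp only [mul_zero, neg_zero, Complex.exp_zero, sub_zero, div_one, sub_self]
  rw [sub_div, div_div_eq_mul_div, div_div, mul_div_mul_right _ _ hz]

lemma differentiableOn_kernel (d : ℂ) : DifferentiableOn ℂ (kernel d) strip := by
  have hq : DifferentiableOn ℂ expQuotient strip :=
    (Complex.differentiableOn_dslope strip_mem_nhds_zero).2 (by fun_prop)
  refine (Complex.differentiableOn_dslope strip_mem_nhds_zero).2 (.sub (.div ?_ hq ?_) ?_)
  · fun_prop
  · exact fun z hz ↦ expQuotient_ne_zero hz
  · fun_prop

lemma norm_kernel_le_of_one_le_re {d z : ℂ} {R : ℝ} (him : |z.im| ≤ R) (hre : 1 ≤ z.re) :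
    ‖kernel d z‖ ≤ (2 * Real.exp (|d.im| * R) + 1) * Real.exp (-min d.re 1 * z.re) := by
  have hz0 : z ≠ 0 := by
    rintro rfl
    simp only [Complex.zero_re] at hre
    linarith
  have hle_d : min d.re 1 * z.re ≤ d.re * z.re := by gcongr; exact min_le_left _ _
  have hle_one : min d.re 1 * z.re ≤ 1 * z.re := by gcongr; exact min_le_right _ _
  have hnum : ‖Complex.exp (-d * z)‖ ≤ Real.exp (|d.im| * R) * Real.exp (-min d.re 1 * z.re) := by
    have him' : d.im * z.im ≤ |d.im| * R :=
      (le_abs_self _).trans ((abs_mul _ _).trans_le (by gcongr))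
    rw [Complex.norm_exp, ← Real.exp_add, neg_mul, Complex.neg_re, Complex.mul_re]
    exact Real.exp_le_exp.2 (by linarith)
  have hexp : ‖Complex.exp (-z)‖ ≤ Real.exp (-min d.re 1 * z.re) := by
    rw [Complex.norm_exp, Complex.neg_re]
    exact Real.exp_le_exp.2 (by linarith)
  have hden : 1 / 2 ≤ ‖1 - Complex.exp (-z)‖ := by
    have hhalf : ‖Complex.exp (-z)‖ ≤ 1 / 2 := by
      rw [Complex.norm_exp, Complex.neg_re, Real.exp_neg, one_div]
      exact inv_anti₀ two_pos (by linarith [Real.add_one_le_exp z.re])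
    have := norm_sub_norm_le (1 : ℂ) (Complex.exp (-z))
    rw [norm_one] at this
    linarith
  have hz1 : 1 ≤ ‖z‖ := hre.trans (Complex.re_le_norm z)
  rw [kernel_of_ne d hz0]
  calc _ ≤ ‖Complex.exp (-d * z)‖ / ‖1 - Complex.exp (-z)‖ + ‖Complex.exp (-z)‖ / ‖z‖ := by
        rw [← norm_div, ← norm_div]
        exact norm_sub_le _ _
    _ ≤ Real.exp (|d.im| * R) * Real.exp (-min d.re 1 * z.re) / (1 / 2) +
          Real.exp (-min d.re 1 * z.re) / 1 := by gcongr
    _ = _ := by ring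

lemma exists_norm_kernel_le (d : ℂ) {R : ℝ} (hR : R < 2 * Real.pi) :
    ∃ C ≥ 0, ∀ z : ℂ, |z.im| ≤ R → -R ≤ z.re →
      ‖kernel d z‖ ≤ C * Real.exp (-min d.re 1 * z.re) := by
  have hsub : Icc (-R) 1 ×ℂ Icc (-R) R ⊆ strip := fun z hz ↦
    (abs_le.2 (Complex.mem_reProdIm.1 hz).2).trans_lt hR
  have hcont : ContinuousOn
      (fun z : ℂ ↦ kernel d z * Complex.exp ((min d.re 1 : ℝ) * z)) (Icc (-R) 1 ×ℂ Icc (-R) R) :=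
    ((differentiableOn_kernel d).continuousOn.mono hsub).mul (by fun_prop)
  obtain ⟨B, hB⟩ := (isCompact_Icc.reProdIm isCompact_Icc).exists_bound_of_continuousOn hcont
  refine ⟨max B (2 * Real.exp (|d.im| * R) + 1), le_max_of_le_right (by positivity),
    fun z him hre ↦ ?_⟩
  rcases le_total z.re 1 with hz | hz
  · have h := hB z (Complex.mem_reProdIm.2 ⟨⟨hre, hz⟩, abs_le.1 him⟩)
    rw [norm_mul, Complex.norm_exp, Complex.re_ofReal_mul] at h
    rw [neg_mul, Real.exp_neg, ← div_eq_mul_inv, le_div_iff₀ (Real.exp_pos _)]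
    exact h.trans (le_max_left _ _)
  · refine (norm_kernel_le_of_one_le_re him hz).trans ?_
    gcongr
    exact le_max_right _ _

lemma exists_norm_iteratedDeriv_kernel_le {d : ℂ} (hd : 0 < d.re) {R : ℝ} (hR0 : 0 < R)
    (hR : R < 2 * Real.pi) : ∃ C, ∃ c > 0, ∀ (j : ℕ), ∀ t ≥ (0 : ℝ),
      ‖iteratedDeriv j (kernel d) t‖ ≤ j.factorial / R ^ j * C * Real.exp (-c * t) := by
  obtain ⟨C, hC, hbound⟩ := exists_norm_kernel_le d hR
  refine ⟨C * Real.exp (min d.re 1 * R), min d.re 1, lt_min hd one_pos,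
    fun j t ht ↦ ?_⟩
  have hdiff : DiffContOnCl ℂ (kernel d) (Metric.ball (t : ℂ) R) := by
    refine DifferentiableOn.diffContOnCl ((differentiableOn_kernel d).mono ?_)
    rw [closure_ball _ hR0.ne']
    exact (Metric.closedBall_subset_ball hR).trans (ball_subset_strip t)
  refine (Complex.norm_iteratedDeriv_le_of_forall_mem_sphere_norm_le (R := R)
    (C := C * Real.exp (min d.re 1 * R) * Real.exp (-min d.re 1 * t)) j hR0 hdiff
    fun z hz ↦ ?_).trans_eq (by ring)
  have him : |z.im| ≤ R := by
    simpa [mem_sphere_iff_norm.1 hz] using Complex.abs_im_le_norm (z - t)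
  have hre : t - R ≤ z.re := by
    have := (abs_le.1 (Complex.abs_re_le_norm (z - t))).1
    rw [mem_sphere_iff_norm.1 hz, Complex.sub_re, Complex.ofReal_re] at this
    linarith
  refine (hbound z him (by linarith)).trans ?_
  rw [mul_assoc, ← Real.exp_add]
  gcongr
  have := mul_le_mul_of_nonneg_left hre (lt_min hd one_pos).le
  linarith

lemma hasDerivAt_iteratedDeriv_kernel (d : ℂ) (j : ℕ) (t : ℝ) :
    HasDerivAt (fun t : ℝ ↦ iteratedDeriv j (kernel d) t)
      (iteratedDeriv (j + 1) (kernel d) t) t := by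
  have han : AnalyticAt ℂ (iteratedDeriv j (kernel d)) t := by
    rw [iteratedDeriv_eq_iterate]
    exact ((differentiableOn_kernel d).analyticOnNhd isOpen_strip).iterated_deriv j _
      (ofReal_mem_strip t)
  rw [iteratedDeriv_succ]
  exact han.differentiableAt.hasDerivAt.comp_ofReal

lemma continuous_iteratedDeriv_kernel (d : ℂ) (j : ℕ) :
    Continuous fun t : ℝ ↦ iteratedDeriv j (kernel d) t :=
  continuous_iff_continuousAt.2 fun t ↦ (hasDerivAt_iteratedDeriv_kernel d j t).continuousAt

lemma hasSum_iteratedDeriv_kernel (d : ℂ) (N : ℕ) (t : ℝ) {x : ℝ}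
    (hx : |x| < 2 * Real.pi) :
    HasSum (fun j : ℕ ↦ (x : ℂ) ^ j / j.factorial * iteratedDeriv (N + j) (kernel d) t)
      (iteratedDeriv N (kernel d) (t + x : ℝ)) := by
  have hdiff : DifferentiableOn ℂ (iteratedDeriv N (kernel d))
      (Metric.ball (t : ℂ) (2 * Real.pi)) := by
    rw [iteratedDeriv_eq_iterate]
    exact (((differentiableOn_kernel d).analyticOnNhd isOpen_strip).iterated_deriv
      N).differentiableOn.mono (ball_subset_strip t)
  have h := Complex.hasSum_taylorSeries_on_ball hdiff (z := (t + x : ℝ))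
    (by simpa using hx)
  convert! h using 1
  funext j
  rw [iteratedDeriv_eq_iterate, iteratedDeriv_eq_iterate, iteratedDeriv_eq_iterate,
    add_comm N j, Function.iterate_add_apply, smul_eq_mul, smul_eq_mul, Complex.ofReal_add,
    add_sub_cancel_left]
  ring

lemma iteratedDeriv_kernel_eq_sub {d : ℂ} (hd : 0 < d.re) (j : ℕ) {t : ℝ} (ht : 0 < t) :
    iteratedDeriv j (kernel d) t =
      (-1) ^ j * (lerchSeries d (-j) t - expIntegral (-j) t) := by
  induction j generalizing t with
  | zero =>
    simp only [iteratedDeriv_zero, Nat.cast_zero, neg_zero, lerchSeries_order_zero hd ht,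
      expIntegral_order_zero ht, pow_zero, one_mul]
    exact kernel_of_ne d (Complex.ofReal_ne_zero.2 ht.ne')
  | succ j ih =>
    have hsub := ((isDirichletFrequency_natCast_add hd).hasDerivAt_laplaceDirichlet (-j) ht).sub
      (isDirichletFrequency_ofReal.hasDerivAt_laplaceDirichlet (-j) ht)
    refine (hasDerivAt_iteratedDeriv_kernel d j t).unique
      (((hsub.const_mul ((-1) ^ j)).congr_of_eventuallyEq ?_).congr_deriv ?_)
    · filter_upwards [lt_mem_nhds ht] with y hy using ih hy
    · rw [Nat.cast_succ, neg_add', pow_succ]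
      ring

end Kernel

section HurwitzZeta

lemma mellin_iteratedDeriv_kernel_comp_add {d : ℂ} (hd : 0 < d.re) (j : ℕ) {w : ℂ}
    (hw : 0 < w.re) {x : ℝ} (hx : 0 ≤ x)
    (hlerch : Integrable
      (fun n : ℕ ↦ ((n : ℂ) + d) ^ (-(-j + w)) * Complex.exp (-((n : ℂ) + d) * x)) Measure.count)
    (hexp : IntegrableOn (fun y : ℝ ↦ (y : ℂ) ^ (-(-j + w)) * Complex.exp (-y * x)) (Ioi 1)) :
    mellin (fun t ↦ iteratedDeriv j (kernel d) (t + x : ℝ)) w =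
      (-1) ^ j * Complex.Gamma w * (lerchSeries d (-j + w) x - expIntegral (-j + w) x) := by
  have hS := (isDirichletFrequency_natCast_add hd).hasMellin_laplaceDirichlet_comp_add (-j) hw
    hlerch
  have hE := isDirichletFrequency_ofReal.hasMellin_laplaceDirichlet_comp_add (-j) hw hexp
  calc mellin (fun t ↦ iteratedDeriv j (kernel d) (t + x : ℝ)) w
      = mellin (fun t ↦ (-1 : ℂ) ^ j • (lerchSeries d (-j) (t + x) - expIntegral (-j) (t + x))) w :=
        setIntegral_congr_fun measurableSet_Ioi fun t (ht : 0 < t) ↦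
          congrArg (_ • ·) (iteratedDeriv_kernel_eq_sub hd j (add_pos_of_pos_of_nonneg ht hx))
    _ = _ := by
        rw [mellin_const_smul, (hasMellin_sub hS.1 hE.1).2, hS.2, hE.2, smul_eq_mul]
        ring

lemma mellin_iteratedDeriv_kernel_comp_add_of_pos {d : ℂ} (hd : 0 < d.re) (j : ℕ) {w : ℂ}
    (hw : 0 < w.re) {x : ℝ} (hx : 0 < x) :
    mellin (fun t ↦ iteratedDeriv j (kernel d) (t + x : ℝ)) w =
      (-1) ^ j * Complex.Gamma w * (lerchSeries d (-j + w) x - expIntegral (-j + w) x) :=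
  mellin_iteratedDeriv_kernel_comp_add hd j hw hx.le
    ((isDirichletFrequency_natCast_add hd).integrable_cpow_mul_cexp _ hx)
    (isDirichletFrequency_ofReal.integrable_cpow_mul_cexp _ hx)

lemma mellin_iteratedDeriv_kernel {d : ℂ} (hd : 0 < d.re) (j : ℕ) {w : ℂ} (hw : j + 1 < w.re) :
    mellin (fun t ↦ iteratedDeriv j (kernel d) t) w =
      (-1) ^ j * Complex.Gamma w * (∑' n : ℕ, ((n : ℂ) + d) ^ (-(w - j)) - 1 / (w - j - 1)) := by
  have hre : 1 < (-(j : ℂ) + w).re := by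
    rw [Complex.add_re, Complex.neg_re, Complex.natCast_re]
    linarith
  have hcpow := integrableOn_Ioi_cpow_of_lt
    (by rw [Complex.neg_re]; linarith : (-(-(j : ℂ) + w)).re < -1) one_pos
  have h := mellin_iteratedDeriv_kernel_comp_add hd j (w := w) (x := 0)
    (lt_trans (by positivity) hw) le_rfl
    (by simpa using integrable_natCast_add_cpow_neg hd hre) (by simpa using hcpow)
  rw [lerchSeries_zero hd hre, expIntegral_zero hre, neg_add_eq_sub] at h
  simpa using h

lemma isPreconnected_re_pos_diff_singleton {a : ℂ} (ha : 0 < a.re) :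
    IsPreconnected ({w : ℂ | 0 < w.re} \ {a}) := by
  have himage := (isConnected_compl_singleton_of_one_lt_rank (by simp : 1 < Module.rank ℝ ℂ)
    (⟨Real.log a.re, a.im⟩ : ℂ)).isPreconnected.image
    (fun z : ℂ ↦ (⟨Real.exp z.re, z.im⟩ : ℂ)) (Continuous.continuousOn <|
      Complex.equivRealProdCLM.symm.continuous.comp (by fun_prop :
        Continuous fun z : ℂ ↦ (Real.exp z.re, z.im)))
  convert! himage using 1
  ext w
  simp only [Set.mem_sdiff, mem_ofPred_eq, mem_singleton_iff, mem_image, mem_compl_iff]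
  constructor
  · rintro ⟨hw, hwa⟩
    refine ⟨⟨Real.log w.re, w.im⟩, fun h ↦ hwa ?_, ?_⟩
    · obtain ⟨hre, him⟩ := Complex.ext_iff.1 h
      exact Complex.ext (Real.log_injOn_pos hw ha hre) him
    · simp [Real.exp_log hw]
  · rintro ⟨z, hz, rfl⟩
    refine ⟨Real.exp_pos _, fun h ↦ hz ?_⟩
    simp [← h]

lemma differentiableAt_mellin_iteratedDeriv_kernel {d : ℂ} (hd : 0 < d.re) (j : ℕ) {w : ℂ}
    (hw : 0 < w.re) :
    DifferentiableAt ℂ (mellin fun t ↦ iteratedDeriv j (kernel d) t) w := by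
  obtain ⟨C, c, hc, hbound⟩ := exists_norm_iteratedDeriv_kernel_le hd one_pos
    (by linarith [Real.pi_gt_three])
  have hcont := continuous_iteratedDeriv_kernel d j
  refine mellin_differentiableAt_of_isBigO_rpow_exp hc
    (hcont.locallyIntegrable.locallyIntegrableOn _)
    (Asymptotics.IsBigO.of_bound (j.factorial / 1 ^ j * C) ?_) (b := 0) ?_ hw
  · filter_upwards [eventually_ge_atTop 0] with t ht
    rw [Real.norm_of_nonneg (Real.exp_pos _).le]
    exact hbound j t ht
  · simp only [neg_zero, Real.rpow_zero]
    exact (hcont.continuousAt.mono_left nhdsWithin_le_nhds).isBigO_one ℝ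

variable {d : ℂ} {Z : ℂ → ℂ}

lemma hurwitzZeta_sub_eq_mellin (hd : 0 < d.re)
    (hZ : ∀ w : ℂ, 1 < w.re → Z w = ∑' n : ℕ, ((n : ℂ) + d) ^ (-w))
    (hZd : DifferentiableOn ℂ Z {w : ℂ | w ≠ 1}) (j : ℕ) {w : ℂ} (hw : 0 < w.re)
    (hwj : w ≠ j + 1) :
    Z (w - j) - 1 / (w - j - 1) =
      (-1) ^ j * (Complex.Gamma w)⁻¹ * mellin (fun t ↦ iteratedDeriv j (kernel d) t) w := by
  have hopen : IsOpen ({w : ℂ | 0 < w.re} \ {(j : ℂ) + 1}) :=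
    (isOpen_lt continuous_const Complex.continuous_re).sdiff isClosed_singleton
  have hne {w : ℂ} (hw : w ∈ {w : ℂ | 0 < w.re} \ {(j : ℂ) + 1}) : w - j - 1 ≠ 0 := fun h ↦
    hw.2 (by rw [mem_singleton_iff]; linear_combination h)
  have hleft : AnalyticOnNhd ℂ (fun w ↦ Z (w - j) - 1 / (w - j - 1))
      ({w : ℂ | 0 < w.re} \ {(j : ℂ) + 1}) := by
    refine DifferentiableOn.analyticOnNhd (.sub (hZd.comp (by fun_prop) fun w hw ↦ ?_)
      (.div (by fun_prop) (by fun_prop) fun w hw ↦ hne hw)) hopen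
    exact sub_ne_zero.1 (hne hw)
  have hright : AnalyticOnNhd ℂ (fun w ↦ (-1) ^ j * (Complex.Gamma w)⁻¹ *
      mellin (fun t ↦ iteratedDeriv j (kernel d) t) w) ({w : ℂ | 0 < w.re} \ {(j : ℂ) + 1}) :=
    DifferentiableOn.analyticOnNhd
      (((Complex.differentiable_one_div_Gamma.const_mul _).differentiableOn).mul fun w hw ↦
        (differentiableAt_mellin_iteratedDeriv_kernel hd j hw.1).differentiableWithinAt) hopen
  refine hleft.eqOn_of_preconnected_of_eventuallyEq hright
    (isPreconnected_re_pos_diff_singleton ?_) (z₀ := (j : ℂ) + 2) ⟨?_, by simp⟩ ?_ ⟨hw, hwj⟩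
  · simpa using j.cast_add_one_pos (α := ℝ)
  · simpa using (by positivity : 0 < (j : ℝ) + 2)
  filter_upwards [(isOpen_lt continuous_const Complex.continuous_re).mem_nhds
    (show (j + 1 : ℝ) < ((j : ℂ) + 2).re by simp)] with w (hw : (j + 1 : ℝ) < w.re)
  have hΓ : Complex.Gamma w ≠ 0 :=
    Complex.Gamma_ne_zero_of_re_pos (lt_trans (by positivity) hw)
  rw [mellin_iteratedDeriv_kernel hd j hw, hZ (w - j) (by simp; linarith)]
  have hsign : ((-1 : ℂ) ^ j) ^ 2 = 1 := by rw [← pow_mul, mul_comm, pow_mul]; simp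
  linear_combination (-(∑' n : ℕ, ((n : ℂ) + d) ^ (-(w - j)) - 1 / (w - j - 1))) *
    (hsign + (-1) ^ j * (-1) ^ j * inv_mul_cancel₀ hΓ)

lemma hasSum_mellin_iteratedDeriv_kernel (hd : 0 < d.re) (N : ℕ) {w : ℂ} (hw : 0 < w.re) {x : ℝ}
    (hx0 : 0 < x) (hx : x < 2 * Real.pi) :
    HasSum (fun j : ℕ ↦ (x : ℂ) ^ j / j.factorial *
        mellin (fun t ↦ iteratedDeriv (N + j) (kernel d) t) w)
      (mellin (fun t ↦ iteratedDeriv N (kernel d) (t + x : ℝ)) w) := by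
  obtain ⟨R, hxR, hR⟩ := exists_between hx
  have hR0 := hx0.trans hxR
  obtain ⟨C, c, hc, hbound⟩ := exists_norm_iteratedDeriv_kernel_le hd hR0 hR
  have hterm (j : ℕ) (t : ℝ) (ht : t > 0) :
      ‖(x : ℂ) ^ j / j.factorial * iteratedDeriv (N + j) (kernel d) t‖ ≤
        N.factorial / R ^ N * C * ((j + N).choose N * (x / R) ^ j) * Real.exp (-c * t) := by
    rw [norm_mul, norm_div, norm_pow, Complex.norm_real, Real.norm_of_nonneg hx0.le,
      Complex.norm_natCast]
    refine (mul_le_mul_of_nonneg_left (hbound (N + j) t ht.le) (by positivity)).trans_eq ?_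
    have hchoose : ((N + j).factorial : ℝ) = (j + N).choose N * N.factorial * j.factorial := by
      rw [add_comm, ← Nat.add_choose_mul_factorial_mul_factorial j N]
      push_cast
      ring
    rw [hchoose, pow_add, div_pow]
    field_simp
  have hconv (j : ℕ) : MellinConvergent
      (fun t ↦ (x : ℂ) ^ j / j.factorial * iteratedDeriv (N + j) (kernel d) t) w :=
    mellinConvergent_of_norm_le_exp hw hc
      ((continuous_iteratedDeriv_kernel d (N + j)).const_mul _).continuousOn (hterm j)
  have hgeom : Summable fun j : ℕ ↦ ((j + N).choose N : ℝ) * (x / R) ^ j :=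
    summable_choose_mul_geometric_of_norm_lt_one N <| by
      rwa [Real.norm_of_nonneg (by positivity), div_lt_one hR0]
  have hsum := hasSum_integral_of_summable_integral_norm hconv
    (Summable.of_nonneg_of_le (fun j ↦ integral_nonneg fun t ↦ norm_nonneg _)
      (fun j ↦ integral_norm_cpow_smul_le_of_norm_le_exp hw hc (hterm j))
      ((hgeom.mul_left _).mul_right _))
  convert! hsum using 1
  · funext j
    rw [← smul_eq_mul, ← mellin_const_smul, mellin]
    rfl
  · refine setIntegral_congr_fun measurableSet_Ioi fun t (_ : 0 < t) ↦ ?_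
    exact ((hasSum_iteratedDeriv_kernel d N t (by rwa [abs_of_pos hx0])).const_smul _).tsum_eq.symm

lemma hasSum_hurwitzZeta_sub_one_div (hd : 0 < d.re)
    (hZ : ∀ w : ℂ, 1 < w.re → Z w = ∑' n : ℕ, ((n : ℂ) + d) ^ (-w))
    (hZd : DifferentiableOn ℂ Z {w : ℂ | w ≠ 1}) {s : ℂ} (hs : ∀ n : ℕ, s ≠ n + 1) {x : ℝ}
    (hx0 : 0 < x) (hx : x < 2 * Real.pi) :
    HasSum (fun k : ℕ ↦ (-x : ℂ) ^ k / k.factorial * (Z (s - k) - 1 / (s - k - 1)))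
      (lerchSeries d s x - expIntegral s x) := by
  obtain ⟨N, hN⟩ := exists_nat_gt (-s.re)
  have hw : 0 < (s + N).re := by
    rw [Complex.add_re, Complex.natCast_re]
    linarith
  have hΓ := Complex.Gamma_ne_zero_of_re_pos hw
  have hsign (k : ℕ) : ((-1 : ℂ) ^ k) ^ 2 = 1 := by rw [← pow_mul, mul_comm, pow_mul]; simp
  have hsum := (hasSum_mellin_iteratedDeriv_kernel hd N hw hx0 hx).mul_left
    ((-1) ^ N * (Complex.Gamma (s + N))⁻¹)
  rw [mellin_iteratedDeriv_kernel_comp_add_of_pos hd N hw hx0, neg_add_cancel_comm_assoc] at hsum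
  convert! hsum using 1
  · funext k
    have hk := hurwitzZeta_sub_eq_mellin hd hZ hZd (N + k) hw
      (fun h ↦ hs k (by push_cast at h; linear_combination h))
    rw [show s + N - (N + k : ℕ) = s - k by push_cast; ring] at hk
    rw [hk, neg_pow, pow_add]
    linear_combination (x ^ k / k.factorial * (-1) ^ N * (Complex.Gamma (s + N))⁻¹ *
      mellin (fun t ↦ iteratedDeriv (N + k) (kernel d) t) (s + N)) * hsign k
  · field_simp
    linear_combination (-(lerchSeries d s x - expIntegral s x)) * hsign N

end HurwitzZeta

section ExpIntegral

lemma mul_expIntegral_add_one (s : ℂ) {x : ℝ} (hx : 0 < x) :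
    s * expIntegral (s + 1) x = Complex.exp (-x) - x * expIntegral s x := by
  have hint (w : ℂ) := isDirichletFrequency_ofReal.integrable_cpow_mul_cexp w hx
  have hderiv (y : ℝ) (hy : y ∈ Ici (1 : ℝ)) :
      HasDerivAt (fun y : ℝ ↦ (y : ℂ) ^ (-s) * Complex.exp (-y * x))
        (-s * ((y : ℂ) ^ (-(s + 1)) * Complex.exp (-y * x)) +
          -x * ((y : ℂ) ^ (-s) * Complex.exp (-y * x))) y := by
    have hpow : HasDerivAt (fun z : ℂ ↦ z ^ (-s)) (-s * (y : ℂ) ^ (-s - 1) * 1) y :=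
      (hasDerivAt_id _).cpow_const (Complex.ofReal_mem_slitPlane.2 (one_pos.trans_le hy))
    have hexp : HasDerivAt (fun z : ℂ ↦ Complex.exp (-z * x)) (Complex.exp (-y * x) * (-1 * x)) y :=
      ((hasDerivAt_id _).neg.mul_const _).cexp
    refine (hpow.mul hexp).comp_ofReal.congr_deriv ?_
    rw [neg_add']
    ring
  have hlim : Tendsto (fun y : ℝ ↦ (y : ℂ) ^ (-s) * Complex.exp (-y * x)) atTop (𝓝 0) := by
    refine squeeze_zero_norm' ?_ (tendsto_rpow_mul_exp_neg_mul_atTop_nhds_zero (-s.re) x hx)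
    filter_upwards [eventually_gt_atTop 0] with y hy
    simp [Complex.norm_cpow_eq_rpow_re_of_pos hy, Complex.norm_exp, mul_comm x]
  have h := integral_Ioi_of_hasDerivAt_of_tendsto' hderiv
    (((hint _).const_mul _).add ((hint _).const_mul _)) hlim
  rw [integral_add ((hint _).const_mul _) ((hint _).const_mul _), integral_const_mul,
    integral_const_mul] at h
  simp only [Complex.ofReal_one, Complex.one_cpow, one_mul, neg_mul] at h
  simp only [laplaceDirichlet, neg_mul]
  linear_combination -h

lemma setIntegral_Ioc_cpow {w : ℂ} (hw : 0 < w.re) :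
    ∫ y in Ioc (0 : ℝ) 1, (y : ℂ) ^ (w - 1) = 1 / w := by
  have hw0 : w ≠ 0 := fun h ↦ by simp [h] at hw
  rw [← intervalIntegral.integral_of_le zero_le_one, integral_cpow (.inl (by simpa using hw))]
  simp [Complex.zero_cpow hw0]

lemma integrableOn_Ioc_cpow {w : ℂ} (hw : 0 < w.re) :
    IntegrableOn (fun y : ℝ ↦ (y : ℂ) ^ (w - 1)) (Ioc 0 1) :=
  (intervalIntegrable_iff_integrableOn_Ioc_of_le zero_le_one).1
    (intervalIntegral.intervalIntegrable_cpow' (by simpa using hw))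

lemma setIntegral_Ioc_norm_cpow {w : ℂ} (hw : 0 < w.re) :
    ∫ y in Ioc (0 : ℝ) 1, ‖(y : ℂ) ^ (w - 1)‖ = 1 / w.re := by
  calc ∫ y in Ioc (0 : ℝ) 1, ‖(y : ℂ) ^ (w - 1)‖
      = ∫ y in Ioc (0 : ℝ) 1, y ^ (w.re - 1) :=
        setIntegral_congr_fun measurableSet_Ioc fun y hy ↦ by
          simp [Complex.norm_cpow_eq_rpow_re_of_pos hy.1]
    _ = 1 / w.re := by
        rw [← intervalIntegral.integral_of_le zero_le_one, integral_rpow (.inl (by linarith))]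
        simp [Real.zero_rpow hw.ne']

lemma hasSum_setIntegral_Ioc_cpow_mul_cexp {w : ℂ} (hw : 0 < w.re) (x : ℂ) :
    HasSum (fun k : ℕ ↦ (-x) ^ k / k.factorial / (k + w))
      (∫ y in Ioc (0 : ℝ) 1, (y : ℂ) ^ (w - 1) * Complex.exp (-x * y)) := by
  have hre (k : ℕ) : w.re ≤ (k + w).re := by simp
  have hpos (k : ℕ) : 0 < (k + w).re := hw.trans_le (hre k)
  have h := hasSum_integral_of_summable_integral_norm (μ := volume.restrict (Ioc (0 : ℝ) 1))
    (F := fun (k : ℕ) (y : ℝ) ↦ (-x) ^ k / k.factorial * (y : ℂ) ^ (k + w - 1))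
    (fun k ↦ (integrableOn_Ioc_cpow (hpos k)).const_mul _) ?_
  · convert! h using 1
    · funext k
      rw [integral_const_mul, setIntegral_Ioc_cpow (hpos k), mul_one_div]
    · refine setIntegral_congr_fun measurableSet_Ioc fun y hy ↦ ?_
      have hexp := (NormedSpace.expSeries_div_hasSum_exp (-x * y)).mul_left ((y : ℂ) ^ (w - 1))
      rw [← Complex.exp_eq_exp_ℂ] at hexp
      refine hexp.tsum_eq.symm.trans (tsum_congr fun k ↦ ?_)
      rw [add_sub_assoc, Complex.cpow_add _ _ (Complex.ofReal_ne_zero.2 hy.1.ne'),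
        Complex.cpow_natCast, mul_pow]
      ring
  · refine .of_nonneg_of_le (fun k ↦ integral_nonneg fun y ↦ norm_nonneg _) (fun k ↦ ?_)
      ((Real.summable_pow_div_factorial ‖x‖).mul_right (1 / w.re))
    simp only [norm_mul, norm_div, norm_pow, norm_neg, Complex.norm_natCast]
    rw [integral_const_mul, setIntegral_Ioc_norm_cpow (hpos k)]
    exact mul_le_mul_of_nonneg_left (one_div_le_one_div_of_le hw (hre k)) (by positivity)

lemma setIntegral_Ioc_eq_sub_expIntegral {w : ℂ} (hw : 0 < w.re) {x : ℝ} (hx : 0 < x) :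
    ∫ y in Ioc (0 : ℝ) 1, (y : ℂ) ^ (w - 1) * Complex.exp (-x * y) =
      Complex.Gamma w * x ^ (-w) - expIntegral (1 - w) x := by
  have hx' : 0 < (x : ℂ).re := by simpa using hx
  have hconv := mellinConvergent_cexp_neg_mul hw hx'
  have hfull := mellin_cexp_neg_mul hw hx'
  rw [MellinConvergent, ← Ioc_union_Ioi_eq_Ioi zero_le_one] at hconv
  rw [mellin, ← Ioc_union_Ioi_eq_Ioi zero_le_one, setIntegral_union (Ioc_disjoint_Ioi le_rfl)
    measurableSet_Ioi (hconv.mono_set subset_union_left) (hconv.mono_set subset_union_right)]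
    at hfull
  simp only [laplaceDirichlet, neg_sub]
  simp only [smul_eq_mul, neg_mul, mul_comm (x : ℂ)] at hfull ⊢
  linear_combination hfull

/-- The expansion of the exponential integral at `0`; it carries the singular term of Erdélyi's
formula. -/
def HasExpIntegralExpansion (s : ℂ) (x : ℝ) : Prop :=
  HasSum (fun k : ℕ ↦ (-x : ℂ) ^ k / k.factorial / (k + 1 - s))
    (Complex.Gamma (1 - s) * x ^ (s - 1) - expIntegral s x)

lemma hasExpIntegralExpansion_of_re_lt_one {s : ℂ} (hs : s.re < 1) {x : ℝ} (hx : 0 < x) :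
    HasExpIntegralExpansion s x := by
  have hw : 0 < (1 - s).re := by simpa using hs
  have h := hasSum_setIntegral_Ioc_cpow_mul_cexp hw x
  rw [setIntegral_Ioc_eq_sub_expIntegral hw hx] at h
  simpa only [HasExpIntegralExpansion, neg_sub, sub_sub_cancel, add_sub_assoc] using h

lemma HasExpIntegralExpansion.add_one {s : ℂ} {x : ℝ} (h : HasExpIntegralExpansion s x)
    (hs : ∀ n : ℕ, s ≠ n) (hx : 0 < x) : HasExpIntegralExpansion (s + 1) x := by
  have hs0 : s ≠ 0 := by simpa using hs 0
  have hsub (k : ℕ) : (k : ℂ) - s ≠ 0 := sub_ne_zero.2 (hs k).symm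
  have hshift : HasSum (fun k : ℕ ↦ (-x : ℂ) ^ k / k.factorial * (k / (k - s)))
      (-x * (Complex.Gamma (1 - s) * x ^ (s - 1) - expIntegral s x)) := by
    rw [← hasSum_nat_add_iff' 1]
    simp only [Finset.range_one, Finset.sum_singleton, Nat.cast_zero, zero_div, mul_zero, sub_zero]
    refine (h.mul_left (-x : ℂ)).congr_fun fun k ↦ ?_
    have hk := hsub (k + 1)
    have hk1 : (k : ℂ) + 1 ≠ 0 := k.cast_add_one_ne_zero
    rw [Nat.factorial_succ]
    push_cast at hk ⊢
    field_simp
    ring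
  have hexp := NormedSpace.expSeries_div_hasSum_exp (-x : ℂ)
  rw [← Complex.exp_eq_exp_ℂ] at hexp
  have hΓ : Complex.Gamma (1 - s) = -s * Complex.Gamma (-s) := by
    rw [← Complex.Gamma_add_one _ (neg_ne_zero.2 hs0), neg_add_eq_sub]
  have hx0 : (x : ℂ) ≠ 0 := Complex.ofReal_ne_zero.2 hx.ne'
  have hpow : (x : ℂ) ^ s = x ^ (s - 1) * x := by
    rw [Complex.cpow_sub _ _ hx0, Complex.cpow_one, div_mul_cancel₀ _ hx0]
  unfold HasExpIntegralExpansion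
  convert! (hshift.sub hexp).mul_left s⁻¹ using 1
  · funext k
    have hk := hsub k
    rw [add_sub_add_right_eq_sub]
    field_simp
    ring
  · rw [hΓ, eq_inv_mul_iff_mul_eq₀ hs0, mul_sub, mul_expIntegral_add_one s hx, add_sub_cancel_right,
      hpow, show 1 - (s + 1) = -s by ring]
    ring

lemma hasExpIntegralExpansion {s : ℂ} (hs : ∀ n : ℕ, s ≠ n + 1) {x : ℝ} (hx : 0 < x) :
    HasExpIntegralExpansion s x := by
  obtain ⟨N, hN⟩ := exists_nat_gt (s.re - 1)
  induction N generalizing s with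
  | zero => exact hasExpIntegralExpansion_of_re_lt_one (by simpa using hN) hx
  | succ N ih =>
    have hs' (n : ℕ) : s - 1 ≠ n := fun h ↦ hs n (by linear_combination h)
    rw [← sub_add_cancel s 1]
    refine (ih (fun n ↦ by exact_mod_cast hs' (n + 1)) ?_).add_one hs' hx
    rw [Complex.sub_re, Complex.one_re]
    push_cast at hN
    linarith

end ExpIntegral

section PowerSeries

variable {c : ℕ → ℂ} {z₀ : ℂ}

lemma summable_mul_pow_of_norm_lt (h : Summable fun k ↦ c k * z₀ ^ k) {z : ℂ} (hz : ‖z‖ < ‖z₀‖) :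
    Summable fun k ↦ c k * z ^ k :=
  summable_powerSeries_of_norm_lt h.hasSum.tendsto_sum_nat.cauchySeq hz

lemma differentiableOn_tsum_mul_pow (h : Summable fun k ↦ c k * z₀ ^ k) :
    DifferentiableOn ℂ (fun z ↦ ∑' k, c k * z ^ k) (Metric.ball 0 ‖z₀‖) := by
  intro z hz
  obtain ⟨ρ, hzρ, hρ⟩ := exists_between (mem_ball_zero_iff.1 hz)
  have hρ0 : 0 ≤ ρ := (norm_nonneg z).trans hzρ.le
  have hsum : Summable fun k ↦ ‖c k * (ρ : ℂ) ^ k‖ :=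
    (summable_mul_pow_of_norm_lt h (by rwa [Complex.norm_of_nonneg hρ0])).norm
  refine ((Complex.differentiableOn_tsum_of_summable_norm hsum (fun k ↦ by fun_prop)
    Metric.isOpen_ball fun k w hw ↦ ?_).differentiableAt
      (Metric.isOpen_ball.mem_nhds (mem_ball_zero_iff.2 hzρ))).differentiableWithinAt
  rw [norm_mul, norm_mul, norm_pow, norm_pow, Complex.norm_of_nonneg hρ0]
  gcongr
  exact (mem_ball_zero_iff.1 hw).le

end PowerSeries

section SlitBall

lemma isPreconnected_ball_inter_slitPlane {R : ℝ} (hR : 0 < R) :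
    IsPreconnected (Metric.ball (0 : ℂ) R ∩ Complex.slitPlane) := by
  have hball : ((R / 2 : ℝ) : ℂ) ∈ Metric.ball (0 : ℂ) R := by
    rw [mem_ball_zero_iff, Complex.norm_of_nonneg (half_pos hR).le]
    exact half_lt_self hR
  exact ((((convex_ball (0 : ℂ) R).starConvex hball).inter
    (Complex.starConvex_ofReal_slitPlane (half_pos hR))).isPathConnected
      ⟨hball, Complex.ofReal_mem_slitPlane.2 (half_pos hR)⟩).isConnected.isPreconnected

lemma mem_slitPlane_iff_not_im_re {u : ℂ} :
    u ∈ Complex.slitPlane ↔ ¬(u.im = 0 ∧ u.re ≤ 0) := by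
  rw [Complex.mem_slitPlane_iff, not_and_or, not_le, or_comm]

lemma hasSum_of_hasSum_ofReal {R : ℝ} {c : ℕ → ℂ} {f : ℂ → ℂ}
    (hf : DifferentiableOn ℂ f (Metric.ball 0 R ∩ Complex.slitPlane))
    (h : ∀ x : ℝ, 0 < x → x < R → HasSum (fun k ↦ c k * (x : ℂ) ^ k) (f x)) {u : ℂ}
    (huR : ‖u‖ < R) (hu : u ∈ Complex.slitPlane) : HasSum (fun k ↦ c k * u ^ k) (f u) := by
  obtain ⟨ρ, huρ, hρR⟩ := exists_between huR
  have hρ := (norm_nonneg u).trans_lt huρ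
  have hnorm : ‖(ρ : ℂ)‖ = ρ := Complex.norm_of_nonneg hρ.le
  have hsum := (h ρ hρ hρR).summable
  have hopen := Metric.isOpen_ball (x := (0 : ℂ)) (ε := ρ) |>.inter Complex.isOpen_slitPlane
  have hF := differentiableOn_tsum_mul_pow hsum
  rw [hnorm] at hF
  have hfρ := (hf.mono (inter_subset_inter_left _
    (Metric.ball_subset_ball hρR.le))).analyticOnNhd hopen
  have heq : f u = ∑' k, c k * u ^ k := by
    refine hfρ.eqOn_of_preconnected_of_frequently_eq
      ((hF.mono inter_subset_left).analyticOnNhd hopen) (isPreconnected_ball_inter_slitPlane hρ)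
      (z₀ := ((ρ / 2 : ℝ) : ℂ)) ⟨?_, Complex.ofReal_mem_slitPlane.2 (half_pos hρ)⟩
      (frequently_ofReal_nhdsNE ?_) ⟨mem_ball_zero_iff.2 huρ, hu⟩
    · rw [mem_ball_zero_iff, Complex.norm_of_nonneg (half_pos hρ).le]
      exact half_lt_self hρ
    · filter_upwards [Ioo_mem_nhds (half_pos hρ) ((half_lt_self hρ).trans hρR)] with x hx
      exact (h x hx.1 hx.2).tsum_eq.symm
  rw [heq]
  exact (summable_mul_pow_of_norm_lt hsum (by rwa [hnorm])).hasSum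

end SlitBall

lemma hasSum_hurwitzZeta {d : ℂ} {Z : ℂ → ℂ} (hd : 0 < d.re)
    (hZ : ∀ w : ℂ, 1 < w.re → Z w = ∑' n : ℕ, ((n : ℂ) + d) ^ (-w))
    (hZd : DifferentiableOn ℂ Z {w : ℂ | w ≠ 1}) {s : ℂ} (hs : ∀ n : ℕ, s ≠ n + 1) {x : ℝ}
    (hx0 : 0 < x) (hx : x < 2 * Real.pi) :
    HasSum (fun k : ℕ ↦ (-x : ℂ) ^ k / k.factorial * Z (s - k))
      (lerchSeries d s x - Complex.Gamma (1 - s) * x ^ (s - 1)) := by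
  have hexp := hasExpIntegralExpansion hs hx0
  convert! (hasSum_hurwitzZeta_sub_one_div hd hZ hZd hs hx0 hx).sub hexp using 1
  · funext k
    rw [show (k : ℂ) + 1 - s = -(s - k - 1) by ring, div_neg]
    ring
  · ring

end Erdelyi

open Erdelyi in
theorem erdelyi_formula_complex_parameter_general {d : ℂ} (hd : 0 < d.re) {s : ℂ}
    (hs : ∀ n : ℕ, s ≠ (n : ℂ) + 1) {Z : ℂ → ℂ}
    (hZ1 : ∀ w : ℂ, 1 < w.re → Z w = ∑' n : ℕ, ((n : ℂ) + d) ^ (-w))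
    (hZ2 : DifferentiableOn ℂ Z {w : ℂ | w ≠ 1}) {Φ : ℂ → ℂ}
    (hΦ1 : ∀ u : ℂ, 0 < u.re →
      Φ u = ∑' n : ℕ, Complex.exp (-((n : ℂ) + d) * u) * ((n : ℂ) + d) ^ (-s))
    (hΦ2 : DifferentiableOn ℂ Φ {u : ℂ | ‖u‖ < 2 * Real.pi ∧ ¬(u.im = 0 ∧ u.re ≤ 0)})
    {u : ℂ} (hu : ¬(u.im = 0 ∧ u.re ≤ 0)) (huπ : ‖u‖ < 2 * Real.pi) :
    HasSum (fun k : ℕ ↦ (-u) ^ k / (k.factorial : ℂ) * Z (s - k))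
      (Φ u - Complex.Gamma (1 - s) * u ^ (s - 1)) := by
  have hcoeff (z : ℂ) (k : ℕ) :
      (-1) ^ k / k.factorial * Z (s - k) * z ^ k = (-z) ^ k / k.factorial * Z (s - k) := by
    rw [neg_pow z]
    ring
  have hdiff : DifferentiableOn ℂ (fun u ↦ Φ u - Complex.Gamma (1 - s) * u ^ (s - 1))
      (Metric.ball 0 (2 * Real.pi) ∩ Complex.slitPlane) :=
    (hΦ2.mono fun z hz ↦ ⟨mem_ball_zero_iff.1 hz.1, mem_slitPlane_iff_not_im_re.1 hz.2⟩).sub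
      (.const_mul (fun z hz ↦ (differentiableAt_id.cpow_const hz.2).differentiableWithinAt) _)
  have hreal (x : ℝ) (hx0 : 0 < x) (hx : x < 2 * Real.pi) :
      HasSum (fun k : ℕ ↦ (-1) ^ k / k.factorial * Z (s - k) * (x : ℂ) ^ k)
        (Φ x - Complex.Gamma (1 - s) * x ^ (s - 1)) := by
    simp only [hcoeff, hΦ1 x (by simpa using hx0), ← lerchSeries_eq_tsum hd s hx0]
    exact hasSum_hurwitzZeta hd hZ1 hZ2 hs hx0 hx
  simpa only [hcoeff] using hasSum_of_hasSum_ofReal hdiff hreal huπ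
    (mem_slitPlane_iff_not_im_re.2 hu)

/-- Erdélyi's expansion formula with complex parameter `d`, `Re d > 0`.
Here `Z` is the analytic continuation of the Hurwitz zeta function `s ↦ Σ_n (n+d)^{-s}`, and
`Φ` is the analytic continuation in `u` of `u ↦ e^{-du} φ(e^{-u}, s, d) = Σ_n e^{-(n+d)u}(n+d)^{-s}`
(the Lerch transcendent), defined on the slit disk `{‖u‖ < 2π} ∖ (-∞, 0]`.
Then for `s` not a positive integer there is `ε > 0` (depending on `d`) such that for all
`u ∉ (-∞,0]` with `‖u‖ < ε`,
`Φ u = Γ(1-s) u^{s-1} + Σ_{k=0}^∞ ((-u)^k/k!) Z(s-k)`, the series converging absolutely. -/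
theorem erdelyi_formula_complex_parameter (d : ℂ) (hd : 0 < d.re) (s : ℂ)
    (hs : ∀ n : ℕ, s ≠ (n : ℂ) + 1)
    (Z : ℂ → ℂ)
    (hZ1 : ∀ w : ℂ, 1 < w.re → Z w = ∑' n : ℕ, ((n : ℂ) + d) ^ (-w))
    (hZ2 : DifferentiableOn ℂ Z {w : ℂ | w ≠ 1})
    (Φ : ℂ → ℂ)
    (hΦ1 : ∀ u : ℂ, 0 < u.re →
      Φ u = ∑' n : ℕ, Complex.exp (-((n : ℂ) + d) * u) * ((n : ℂ) + d) ^ (-s))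
    (hΦ2 : DifferentiableOn ℂ Φ
      {u : ℂ | ‖u‖ < 2 * Real.pi ∧ ¬(u.im = 0 ∧ u.re ≤ 0)}) :
    ∃ ε > 0, ∀ u : ℂ, ¬(u.im = 0 ∧ u.re ≤ 0) → ‖u‖ < ε →
      Summable (fun k : ℕ => ‖(-u) ^ k / (k.factorial : ℂ) * Z (s - k)‖) ∧
      HasSum (fun k : ℕ => (-u) ^ k / (k.factorial : ℂ) * Z (s - k))
        (Φ u - Complex.Gamma (1 - s) * u ^ (s - 1)) := by
  refine ⟨2 * Real.pi, Real.two_pi_pos, fun u hu huπ ↦ ?_⟩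
  have h := erdelyi_formula_complex_parameter_general hd hs hZ1 hZ2 hΦ1 hΦ2 hu huπ
  exact ⟨h.summable.norm, h⟩
end

section
/- Fix δ > 0, a positive integer r, and a real r' > 1. For every d ∈ ℂ with Re(d) ≥ 1/r' and |d| ≤ r', every s ∈ ℂ with |s| ≤ r and distance at least δ from every positive integer, and every nonnegative integer k, one has |ζ(s - k, d)| ≤ C · (e²/(2π))^k · k! · (k+1)^{r+1} · (1 + r'^{2k}), where C depends only on r, r', δ. -/
/-!
For `Re w > 1`, `Γ(w) ζ(w, d)` is the Mellin transform of `e^{-dt} / (1 - e^{-t})`. The part of the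
integral over `(1, ∞)` is entire in `w`. On `(0, 1]` the kernel is `∑ aₙ t^{n-1}`, and since the
nearest pole sits at distance `2π` the `aₙ` are `O(2^{-n})` uniformly for bounded `d`; this part
integrates to `∑ aₙ / (w + n - 1)`. So, at a fixed distance from the integers and with `Re w`
bounded above, `ζ(w, d)` is at most a constant times `|1 / Γ(w)|`, and
`1 / Γ(s - k) = (s - k) ⋯ (s - 1) / Γ(s)` grows like `k! (k + 1)^{|s|}`. If `s - k` is close to an
integer other than `1`, the maximum principle on a circle of radius `1/2` around this integer
reduces to the previous case at the cost of one power of `k + 1`. The remaining factors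
`(e² / 2π)^k` and `1 + r'^{2k}` are at least `1`.
-/

noncomputable section

open Complex Filter MeasureTheory Set Topology
open scoped Nat

section Gamma

theorem inv_Gamma_eq_prod_mul_inv_Gamma_add_nat (z : ℂ) (n : ℕ) :
    (Gamma z)⁻¹ = (∏ i ∈ Finset.range n, (z + i)) * (Gamma (z + n))⁻¹ := by
  induction n with
  | zero => simp
  | succ n ih =>
    rw [ih, one_div_Gamma_eq_self_mul_one_div_Gamma_add_one (z + n), Finset.prod_range_succ,
      mul_assoc, add_assoc, Nat.cast_succ]

theorem prod_range_add_succ_le {R : ℝ} (hR : 1 ≤ R) (k : ℕ) :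
    ∏ j ∈ Finset.range k, (R + ((j : ℝ) + 1)) ≤ k ! * ((k : ℝ) + 1) ^ R := by
  induction k with
  | zero => simp
  | succ k ih =>
    have hk : (0 : ℝ) < k + 1 := by positivity
    have hbernoulli : 1 + R * (1 / (k + 1)) ≤ (1 + 1 / ((k : ℝ) + 1)) ^ R :=
      one_add_mul_self_le_rpow_one_add (by linarith [one_div_pos.2 hk]) hR
    rw [Finset.prod_range_succ, Nat.factorial_succ]
    push_cast
    calc (∏ j ∈ Finset.range k, (R + ((j : ℝ) + 1))) * (R + (k + 1))
        ≤ (k ! * ((k : ℝ) + 1) ^ R) * (R + (k + 1)) := by gcongr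
      _ = k ! * (k + 1) * (((k : ℝ) + 1) ^ R * (1 + R * (1 / (k + 1)))) := by field_simp; ring
      _ ≤ k ! * (k + 1) * (((k : ℝ) + 1) ^ R * (1 + 1 / ((k : ℝ) + 1)) ^ R) := by gcongr
      _ = (k + 1) * k ! * ((k : ℝ) + 1 + 1) ^ R := by
        rw [← Real.mul_rpow hk.le (by positivity), mul_one_add, mul_one_div_cancel hk.ne',
          mul_comm (k ! : ℝ)]

theorem exists_norm_inv_Gamma_sub_nat_le {R : ℝ} (hR : 1 ≤ R) :
    ∃ M : ℝ, ∀ s : ℂ, ‖s‖ ≤ R → ∀ k : ℕ, ‖(Gamma (s - k))⁻¹‖ ≤ M * (k ! * ((k : ℝ) + 1) ^ R) := by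
  obtain ⟨M, hM⟩ := (isCompact_closedBall (0 : ℂ) R).exists_bound_of_continuousOn
    differentiable_one_div_Gamma.continuous.continuousOn
  refine ⟨M, fun s hs k => ?_⟩
  have hMs : ‖(Gamma s)⁻¹‖ ≤ M := hM s (mem_closedBall_zero_iff.2 hs)
  have hprod : ‖∏ i ∈ Finset.range k, (s - k + i)‖ ≤ k ! * ((k : ℝ) + 1) ^ R := by
    rw [norm_prod, ← Finset.prod_range_reflect]
    refine (Finset.prod_le_prod (fun _ _ => norm_nonneg _) fun j hj => ?_).trans
      (prod_range_add_succ_le hR k)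
    have hjk : j + 1 ≤ k := Finset.mem_range.1 hj
    rw [Nat.sub_sub, add_comm 1 j, Nat.cast_sub hjk, sub_add_sub_cancel]
    refine (norm_sub_le _ _).trans ?_
    rw [norm_natCast]
    push_cast
    gcongr
  rw [inv_Gamma_eq_prod_mul_inv_Gamma_add_nat _ k, sub_add_cancel, norm_mul, mul_comm]
  exact mul_le_mul hMs hprod (norm_nonneg _) ((norm_nonneg _).trans hMs)

end Gamma

section PartialFractions

variable {ι : Type*} {a p : ι → ℂ}

theorem norm_div_le_div_of_le_norm {ε : ℝ} (hε : 0 < ε) {b z : ℂ} (h : ε ≤ ‖z‖) :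
    ‖b / z‖ ≤ ‖b‖ / ε := by
  rw [norm_div]
  gcongr

theorem norm_tsum_div_add_le (ha : Summable fun i => ‖a i‖) {ε : ℝ} (hε : 0 < ε) {w : ℂ}
    (hw : ∀ i, ε ≤ ‖w + p i‖) : ‖∑' i, a i / (w + p i)‖ ≤ (∑' i, ‖a i‖) / ε :=
  tsum_of_norm_bounded (ha.hasSum.div_const ε) fun i => norm_div_le_div_of_le_norm hε (hw i)

theorem differentiableOn_tsum_div_add (ha : Summable fun i => ‖a i‖) :
    DifferentiableOn ℂ (fun w => ∑' i, a i / (w + p i)) (closure (range fun i => -p i))ᶜ := by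
  intro w₀ hw₀
  obtain ⟨ε, hε, hball⟩ := Metric.isOpen_iff.1 isClosed_closure.isOpen_compl w₀ hw₀
  have hfar : ∀ w ∈ Metric.ball w₀ (ε / 2), ∀ i, ε / 2 ≤ ‖w + p i‖ := by
    intro w hw i
    have h₀ : ε ≤ dist (-p i) w₀ := by
      by_contra! h
      exact hball h (subset_closure ⟨i, rfl⟩)
    have h₁ := dist_triangle (-p i) w w₀
    rw [Metric.mem_ball] at hw
    rw [← sub_neg_eq_add, ← dist_eq_norm, dist_comm]
    linarith
  have hdiff : DifferentiableOn ℂ (fun w => ∑' i, a i / (w + p i)) (Metric.ball w₀ (ε / 2)) := by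
    refine differentiableOn_tsum_of_summable_norm (ha.div_const (ε / 2)) (fun i => ?_)
      Metric.isOpen_ball fun i w hw => norm_div_le_div_of_le_norm (half_pos hε) (hfar w hw i)
    exact DifferentiableOn.div (by fun_prop) (by fun_prop) fun w hw =>
      norm_pos_iff.1 ((half_pos hε).trans_le (hfar w hw i))
  exact (hdiff.differentiableAt
    (Metric.ball_mem_nhds _ (half_pos hε))).differentiableWithinAt

end PartialFractions

section Mellin

variable {ι E : Type*} [NormedAddCommGroup E] [NormedSpace ℂ E] {f : ℝ → E} {s : ℂ}

theorem norm_cpow_sub_one_smul {t : ℝ} (ht : 0 < t) (x : E) :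
    ‖(t : ℂ) ^ (s - 1) • x‖ = t ^ (s.re - 1) * ‖x‖ := by
  rw [norm_smul, norm_cpow_eq_rpow_re_of_pos ht, sub_re, one_re]

theorem hasSum_mellin_of_summable_integral_norm [Countable ι] {F : ι → ℝ → E}
    (hF : ∀ i, MellinConvergent (F i) s)
    (hsum : Summable fun i => ∫ t in Ioi (0 : ℝ), t ^ (s.re - 1) * ‖F i t‖)
    (hf : ∀ t ∈ Ioi (0 : ℝ), HasSum (fun i => F i t) (f t)) :
    HasSum (fun i => mellin (F i) s) (mellin f s) := by
  have hnorm (i : ι) : ∫ t in Ioi (0 : ℝ), t ^ (s.re - 1) * ‖F i t‖ =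
      ∫ t in Ioi (0 : ℝ), ‖(t : ℂ) ^ (s - 1) • F i t‖ :=
    setIntegral_congr_fun measurableSet_Ioi fun t ht => (norm_cpow_sub_one_smul ht _).symm
  simp_rw [hnorm] at hsum
  convert! hasSum_integral_of_summable_integral_norm hF hsum using 1
  exact setIntegral_congr_fun measurableSet_Ioi fun t ht => ((hf t ht).const_smul _).tsum_eq.symm

theorem mellin_indicator {S : Set ℝ} (hS : MeasurableSet S) (hS₀ : S ⊆ Ioi 0) :
    mellin (S.indicator f) s = ∫ t in S, (t : ℂ) ^ (s - 1) • f t := by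
  simp_rw [mellin, ← indicator_smul]
  rw [setIntegral_indicator hS, inter_eq_right.2 hS₀]

theorem mellin_indicator_Ioc_add_mellin_indicator_Ioi (hf : MellinConvergent f s) {b : ℝ}
    (hb : 0 ≤ b) :
    mellin ((Ioc 0 b).indicator f) s + mellin ((Ioi b).indicator f) s = mellin f s := by
  rw [mellin_indicator measurableSet_Ioc Ioc_subset_Ioi_self,
    mellin_indicator measurableSet_Ioi (Ioi_subset_Ioi hb),
    ← setIntegral_union (Ioc_disjoint_Ioi le_rfl) measurableSet_Ioi
      (hf.mono_set Ioc_subset_Ioi_self) (hf.mono_set (Ioi_subset_Ioi hb)),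
    Ioc_union_Ioi_eq_Ioi hb, mellin]

theorem integral_rpow_mul_norm_indicator_cpow {p : ℂ} (hp : 0 < (s + p).re) :
    ∫ t in Ioi (0 : ℝ), t ^ (s.re - 1) * ‖(Ioc 0 1).indicator (fun t : ℝ => (t : ℂ) ^ p) t‖ =
      1 / (s + p).re := by
  have hind (t : ℝ) : t ^ (s.re - 1) * ‖(Ioc 0 1).indicator (fun t : ℝ => (t : ℂ) ^ p) t‖ =
      (Ioc 0 1).indicator (fun t => t ^ ((s + p).re - 1)) t := by
    by_cases ht : t ∈ Ioc (0 : ℝ) 1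
    · rw [indicator_of_mem ht, indicator_of_mem ht, norm_cpow_eq_rpow_re_of_pos ht.1,
        ← Real.rpow_add ht.1, add_re, sub_add_eq_add_sub]
    · rw [indicator_of_notMem ht, indicator_of_notMem ht, norm_zero, mul_zero]
  simp_rw [hind]
  rw [setIntegral_indicator measurableSet_Ioc, inter_eq_right.2 Ioc_subset_Ioi_self,
    ← intervalIntegral.integral_of_le zero_le_one, integral_rpow (Or.inl (by linarith)),
    sub_add_cancel, Real.one_rpow, Real.zero_rpow hp.ne', sub_zero]

theorem hasSum_mellin_indicator_Ioc [Countable ι] {a p : ι → ℂ} {g : ℝ → ℂ} {σ : ℝ} (hσ : 0 < σ)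
    (hp : ∀ i, σ ≤ (s + p i).re) (ha : Summable fun i => ‖a i‖)
    (hg : ∀ t ∈ Ioc (0 : ℝ) 1, HasSum (fun i => a i * (t : ℂ) ^ p i) (g t)) :
    HasSum (fun i => a i / (s + p i)) (mellin ((Ioc 0 1).indicator g) s) := by
  have hp₀ (i : ι) : 0 < (s + p i).re := hσ.trans_le (hp i)
  have hterm (i : ι) : HasMellin
      (fun t => a i • (Ioc 0 1).indicator (fun t : ℝ => (t : ℂ) ^ p i) t) s (a i / (s + p i)) := by
    have h := hasMellin_cpow_Ioc (s := s) (p i) (hp₀ i)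
    simpa only [h.2, smul_eq_mul, mul_one_div] using hasMellin_const_smul h.1 (a i)
  have hsum := hasSum_mellin_of_summable_integral_norm (f := (Ioc 0 1).indicator g)
    (fun i => (hterm i).1) ?_ ?_
  · simpa only [(hterm _).2] using hsum
  · simp_rw [norm_smul, mul_left_comm, integral_const_mul,
      integral_rpow_mul_norm_indicator_cpow (hp₀ _)]
    refine (ha.mul_right (1 / σ)).of_nonneg_of_le (fun i => ?_) fun i => ?_
    · exact mul_nonneg (norm_nonneg _) (one_div_nonneg.2 (hp₀ i).le)
    · gcongr
      exact hp i
  · intro t _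
    by_cases ht : t ∈ Ioc (0 : ℝ) 1
    · simpa only [indicator_of_mem ht, smul_eq_mul] using hg t ht
    · simpa only [indicator_of_notMem ht, smul_zero] using hasSum_zero

section Tail

variable {B c : ℝ}

theorem integrableOn_rpow_sub_one_mul_exp_neg_mul {a : ℝ} (ha : 0 < a) (hc : 0 < c) :
    IntegrableOn (fun t : ℝ => t ^ (a - 1) * Real.exp (-(c * t))) (Ioi 0) := by
  simpa using integrableOn_rpow_mul_exp_neg_mul_rpow (show -1 < a - 1 by linarith) one_pos hc

theorem norm_mellin_indicator_Ioi_le (hc : 0 < c)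
    (hf : ∀ t, 1 < t → ‖f t‖ ≤ B * Real.exp (-(c * t))) {R : ℝ} (hR : 0 < R) (hs : s.re ≤ R) :
    ‖mellin ((Ioi 1).indicator f) s‖ ≤ B * ((1 / c) ^ R * Real.Gamma R) := by
  have hB : 0 ≤ B := nonneg_of_mul_nonneg_left ((norm_nonneg _).trans (hf 2 one_lt_two))
    (Real.exp_pos _)
  have hint : IntegrableOn (fun t => B * (t ^ (R - 1) * Real.exp (-(c * t)))) (Ioi 0) :=
    (integrableOn_rpow_sub_one_mul_exp_neg_mul hR hc).const_mul B
  have hsub : Ioi (1 : ℝ) ⊆ Ioi 0 := Ioi_subset_Ioi zero_le_one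
  rw [mellin_indicator measurableSet_Ioi hsub, ← Real.integral_rpow_mul_exp_neg_mul_Ioi hR hc,
    ← integral_const_mul]
  refine (norm_integral_le_of_norm_le (hint.mono_set hsub) ?_).trans
    (setIntegral_mono_set hint ?_ hsub.eventuallyLE)
  · filter_upwards [ae_restrict_mem measurableSet_Ioi] with t ht
    rw [norm_cpow_sub_one_smul (hsub ht), mul_left_comm]
    gcongr
    · exact Real.rpow_nonneg (hsub ht).le _
    · exact (mem_Ioi.1 ht).le
    · exact hf t ht
  · filter_upwards [ae_restrict_mem measurableSet_Ioi] with t ht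
    exact mul_nonneg hB (mul_nonneg (Real.rpow_nonneg (mem_Ioi.1 ht).le _) (Real.exp_pos _).le)

theorem differentiable_mellin_indicator_Ioi (hc : 0 < c)
    (hf : ∀ t, 1 < t → ‖f t‖ ≤ B * Real.exp (-(c * t)))
    (hmeas : AEStronglyMeasurable f (volume.restrict (Ioi 1))) :
    Differentiable ℂ (mellin ((Ioi 1).indicator f)) := by
  intro w
  have hint : IntegrableOn f (Ioi 1) := by
    refine ((integrableOn_exp_mul_Ioi (neg_lt_zero.2 hc) 1).const_mul B).mono' hmeas ?_
    filter_upwards [ae_restrict_mem measurableSet_Ioi] with t ht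
    simpa only [neg_mul] using hf t ht
  refine mellin_differentiableAt_of_isBigO_rpow_exp (b := w.re - 1) hc
    ((hint.integrable_indicator measurableSet_Ioi).locallyIntegrable.locallyIntegrableOn _)
    ?_ ?_ (sub_one_lt _)
  · refine Asymptotics.IsBigO.of_bound B ?_
    filter_upwards [eventually_gt_atTop 1] with t ht
    rw [indicator_of_mem (mem_Ioi.2 ht), Real.norm_of_nonneg (Real.exp_pos _).le, neg_mul]
    exact hf t ht
  · refine Asymptotics.IsBigO.of_bound 1 ?_
    filter_upwards [Ioo_mem_nhdsGT one_pos] with t ht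
    rw [indicator_of_notMem (notMem_Ioi.2 ht.2.le), norm_zero]
    positivity

end Tail

end Mellin

section MellinExp

variable {a c : ℂ}

theorem mellinConvergent_cexp_neg_mul (ha : 0 < a.re) (hc : 0 < c.re) :
    MellinConvergent (fun t : ℝ => cexp (-(c * t))) a := by
  have hcont : Continuous fun t : ℝ => cexp (-(c * t)) := by fun_prop
  rw [MellinConvergent,
    mellin_convergent_iff_norm Subset.rfl measurableSet_Ioi hcont.aestronglyMeasurable]
  simpa [norm_exp] using integrableOn_rpow_sub_one_mul_exp_neg_mul ha hc

theorem differentiableAt_mellin_cexp_neg_mul (ha : 0 < a.re) (hc : 0 < c.re) :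
    DifferentiableAt ℂ (fun c : ℂ => mellin (fun t : ℝ => cexp (-(c * t))) a) c := by
  have hcpow : ContinuousOn (fun t : ℝ => (t : ℂ) ^ (a - 1)) (Ioi 0) := fun t ht =>
    (continuousAt_ofReal_cpow_const _ _ (Or.inr (ne_of_gt ht))).continuousWithinAt
  refine (hasDerivAt_integral_of_dominated_loc_of_deriv_le (μ := volume.restrict (Ioi 0))
    (F := fun (c : ℂ) (t : ℝ) => (t : ℂ) ^ (a - 1) • cexp (-(c * t)))
    (F' := fun (c : ℂ) (t : ℝ) => (t : ℂ) ^ (a - 1) • (cexp (-(c * t)) * -(t : ℂ)))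
    (s := {z | c.re / 2 < z.re})
    (bound := fun t => t ^ (a.re + 1 - 1) * Real.exp (-(c.re / 2 * t)))
    ((isOpen_lt continuous_const continuous_re).mem_nhds (half_lt_self hc)) ?_
    (mellinConvergent_cexp_neg_mul ha hc) ?_ ?_
    (integrableOn_rpow_sub_one_mul_exp_neg_mul (by linarith) (half_pos hc)) ?_).2.differentiableAt
  · exact Eventually.of_forall fun z =>
      (hcpow.smul (by fun_prop)).aestronglyMeasurable measurableSet_Ioi
  · exact (hcpow.smul (by fun_prop)).aestronglyMeasurable measurableSet_Ioi
  · filter_upwards [ae_restrict_mem measurableSet_Ioi] with t (ht : 0 < t) z (hz : c.re / 2 < z.re)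
    rw [norm_cpow_sub_one_smul ht, norm_mul, norm_neg, norm_real, Real.norm_of_nonneg ht.le,
      add_sub_right_comm, Real.rpow_add_one ht.ne', mul_assoc, mul_comm t, norm_exp]
    gcongr
    simpa using! mul_le_mul_of_nonneg_right hz.le ht.le
  · refine Eventually.of_forall fun t z _ => HasDerivAt.fun_const_smul _ (HasDerivAt.cexp ?_)
    simpa using! ((hasDerivAt_id z).mul_const (t : ℂ)).fun_neg

theorem mellin_cexp_neg_mul_ofReal (ha : 0 < a.re) {x : ℝ} (hx : 0 < x) :
    mellin (fun t : ℝ => cexp (-(x * t))) a = (x : ℂ) ^ (-a) * Gamma a := by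
  simp_rw [mellin, smul_eq_mul]
  rw [integral_cpow_mul_exp_neg_mul_Ioi ha hx, one_div,
    inv_cpow _ _ (by rw [arg_ofReal_of_nonneg hx.le]; exact Real.pi_pos.ne), cpow_neg]

theorem mellin_cexp_neg_mul (ha : 0 < a.re) (hc : 0 < c.re) :
    mellin (fun t : ℝ => cexp (-(c * t))) a = c ^ (-a) * Gamma a := by
  have hopen : IsOpen {z : ℂ | 0 < z.re} := isOpen_lt continuous_const continuous_re
  have hmellin : DifferentiableOn ℂ (fun z : ℂ => mellin (fun t : ℝ => cexp (-(z * t))) a)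
      {z | 0 < z.re} := fun z hz =>
    (differentiableAt_mellin_cexp_neg_mul ha hz).differentiableWithinAt
  have hpow : DifferentiableOn ℂ (fun z : ℂ => z ^ (-a) * Gamma a) {z | 0 < z.re} := fun z hz =>
    ((differentiableAt_id.cpow_const (Or.inl hz)).mul_const _).differentiableWithinAt
  have hreal : Tendsto ((↑) : ℝ → ℂ) (𝓝[>] 1) (𝓝[≠] 1) :=
    tendsto_nhdsWithin_iff.2 ⟨(continuous_ofReal.tendsto' 1 1 ofReal_one).mono_left
      nhdsWithin_le_nhds, by
        filter_upwards [self_mem_nhdsWithin] with x hx using ofReal_ne_one.2 (ne_of_gt hx)⟩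
  refine (hmellin.analyticOnNhd hopen).eqOn_of_preconnected_of_frequently_eq
    (hpow.analyticOnNhd hopen) (convex_halfSpace_re_gt 0).isPreconnected
    (show (0 : ℝ) < (1 : ℂ).re by simp) (hreal.frequently (Eventually.frequently ?_)) hc
  filter_upwards [self_mem_nhdsWithin] with x hx
  exact mellin_cexp_neg_mul_ofReal ha (one_pos.trans hx)

end MellinExp

section Kernel

variable {d : ℂ}

/-- The kernel `e^{-dt} / (1 - e^{-t})`, whose Mellin transform at `w` is `Γ(w) ζ(w, d)`. -/
def hurwitzKernel (d : ℂ) (t : ℝ) : ℂ := cexp (-(d * t)) / (1 - cexp (-t))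

/-- The function `z e^{-dz} / (1 - e^{-z})`, the exponential generating function of the Bernoulli
polynomials at `1 - d`. Writing `(1 - e^{-z}) / z` as a `dslope` fills in the value at `0`. -/
def bernoulliGen (d z : ℂ) : ℂ := cexp (-(d * z)) / dslope (fun z => 1 - cexp (-z)) 0 z

/-- The Taylor coefficient `B_n(1 - d) / n!` of `bernoulliGen d` at `0`. -/
def bernoulliCoeff (d : ℂ) (n : ℕ) : ℂ := (n ! : ℂ)⁻¹ * iteratedDeriv n (bernoulliGen d) 0

theorem differentiable_dslope_one_sub_cexp_neg :
    Differentiable ℂ (dslope (fun z => 1 - cexp (-z)) 0) := by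
  rw [← differentiableOn_univ, differentiableOn_dslope univ_mem]
  fun_prop

theorem one_sub_cexp_neg_ne_zero {z : ℂ} (hz₀ : z ≠ 0) (hz : ‖z‖ < 2 * Real.pi) :
    1 - cexp (-z) ≠ 0 := by
  intro h
  obtain ⟨n, hn⟩ := exp_eq_one_iff.1 (sub_eq_zero.1 h).symm
  have hnorm : ‖z‖ = |(n : ℝ)| * (2 * Real.pi) := by
    rw [← norm_neg, hn]
    simp [abs_of_pos Real.pi_pos]
  have hn₀ : n ≠ 0 := by
    rintro rfl
    exact hz₀ (by simpa using hn)
  have hn₁ : (1 : ℝ) ≤ |(n : ℝ)| := mod_cast Int.one_le_abs hn₀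
  exact hz.not_ge (hnorm ▸ le_mul_of_one_le_left Real.two_pi_pos.le hn₁)

theorem dslope_one_sub_cexp_neg_ne_zero {z : ℂ} (hz : ‖z‖ < 2 * Real.pi) :
    dslope (fun z => 1 - cexp (-z)) 0 z ≠ 0 := by
  rcases eq_or_ne z 0 with rfl | hz₀
  · have h : HasDerivAt (fun z => 1 - cexp (-z)) 1 0 := by
      simpa using ((hasDerivAt_neg (0 : ℂ)).cexp).const_sub 1
    rw [dslope_same, h.deriv]
    exact one_ne_zero
  · rw [dslope_of_ne _ hz₀, slope_def_field]
    simpa using ⟨one_sub_cexp_neg_ne_zero hz₀ hz, hz₀⟩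

theorem differentiableOn_bernoulliGen (d : ℂ) :
    DifferentiableOn ℂ (bernoulliGen d) (Metric.ball 0 (2 * Real.pi)) :=
  DifferentiableOn.div (by fun_prop) differentiable_dslope_one_sub_cexp_neg.differentiableOn
    fun _ hz => dslope_one_sub_cexp_neg_ne_zero (mem_ball_zero_iff.1 hz)

theorem bernoulliGen_ofReal {t : ℝ} (ht : t ≠ 0) :
    bernoulliGen d t = t * hurwitzKernel d t := by
  rw [bernoulliGen, hurwitzKernel, dslope_of_ne _ (ofReal_ne_zero.2 ht), slope_def_field]
  simp [div_div_eq_mul_div, mul_div_assoc, mul_comm]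

theorem hasSum_bernoulliCoeff_mul_pow (d : ℂ) {z : ℂ} (hz : ‖z‖ < 2 * Real.pi) :
    HasSum (fun n => bernoulliCoeff d n * z ^ n) (bernoulliGen d z) := by
  convert! hasSum_taylorSeries_on_ball (differentiableOn_bernoulliGen d)
    (mem_ball_zero_iff.2 hz) using 2 with n
  rw [bernoulliCoeff, sub_zero, smul_eq_mul, smul_eq_mul]
  ring

theorem exists_norm_bernoulliCoeff_le (D : ℝ) :
    ∃ M : ℝ, ∀ d : ℂ, ‖d‖ ≤ D → ∀ n, ‖bernoulliCoeff d n‖ ≤ M * (1 / 2) ^ n := by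
  have hsub : Metric.closedBall (0 : ℂ) 2 ⊆ Metric.ball 0 (2 * Real.pi) :=
    Metric.closedBall_subset_ball (by linarith [Real.pi_gt_three])
  obtain ⟨M, hM⟩ := (isCompact_closedBall (0 : ℂ) 2).exists_bound_of_continuousOn
    (differentiable_dslope_one_sub_cexp_neg.continuous.continuousOn.inv₀ fun z hz =>
      dslope_one_sub_cexp_neg_ne_zero (mem_ball_zero_iff.1 (hsub hz)))
  refine ⟨Real.exp (D * 2) * M, fun d hd n => ?_⟩
  have hsphere : ∀ z ∈ Metric.sphere (0 : ℂ) 2, ‖bernoulliGen d z‖ ≤ Real.exp (D * 2) * M := by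
    intro z hz
    rw [bernoulliGen, div_eq_mul_inv, norm_mul]
    refine mul_le_mul ?_ (hM z (Metric.sphere_subset_closedBall hz)) (norm_nonneg _)
      (Real.exp_pos _).le
    refine (norm_exp_le_exp_norm _).trans ?_
    rw [norm_neg, norm_mul, mem_sphere_zero_iff_norm.1 hz]
    gcongr
  have hcauchy : ‖iteratedDeriv n (bernoulliGen d) 0‖ ≤ n ! * (Real.exp (D * 2) * M) / 2 ^ n :=
    norm_iteratedDeriv_le_of_forall_mem_sphere_norm_le n two_pos
      (((differentiableOn_bernoulliGen d).mono hsub).diffContOnCl_ball Subset.rfl) hsphere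
  calc ‖bernoulliCoeff d n‖ = (n ! : ℝ)⁻¹ * ‖iteratedDeriv n (bernoulliGen d) 0‖ := by
        rw [bernoulliCoeff, norm_mul, norm_inv, norm_natCast]
    _ ≤ (n ! : ℝ)⁻¹ * (n ! * (Real.exp (D * 2) * M) / 2 ^ n) := by gcongr
    _ = Real.exp (D * 2) * M * (1 / 2) ^ n := by
        rw [one_div, inv_pow]
        field_simp

theorem summable_norm_bernoulliCoeff (d : ℂ) : Summable fun n => ‖bernoulliCoeff d n‖ := by
  obtain ⟨M, hM⟩ := exists_norm_bernoulliCoeff_le ‖d‖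
  exact (summable_geometric_two.mul_left M).of_nonneg_of_le (fun _ => norm_nonneg _) (hM d le_rfl)

theorem hasSum_bernoulliCoeff_mul_cpow {t : ℝ} (ht : t ∈ Ioc (0 : ℝ) 1) :
    HasSum (fun n : ℕ => bernoulliCoeff d n * (t : ℂ) ^ ((n : ℂ) - 1)) (hurwitzKernel d t) := by
  have ht₀ : (t : ℂ) ≠ 0 := ofReal_ne_zero.2 ht.1.ne'
  have hnorm : ‖(t : ℂ)‖ < 2 * Real.pi := by
    rw [norm_real, Real.norm_of_nonneg ht.1.le]
    linarith [ht.2, Real.pi_gt_three]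
  convert! (hasSum_bernoulliCoeff_mul_pow d hnorm).div_const (t : ℂ) using 1
  · funext n
    rw [cpow_sub _ _ ht₀, cpow_natCast, cpow_one, mul_div_assoc]
  · rw [bernoulliGen_ofReal ht.1.ne', mul_div_cancel_left₀ _ ht₀]

theorem norm_cexp_neg_ofReal_lt_one {t : ℝ} (ht : 0 < t) : ‖cexp (-t)‖ < 1 := by
  simpa [norm_exp] using ht

theorem hasSum_cexp_neg_nat_add_mul {t : ℝ} (ht : 0 < t) :
    HasSum (fun n : ℕ => cexp (-((n + d) * t))) (hurwitzKernel d t) := by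
  convert! (hasSum_geometric_of_norm_lt_one (norm_cexp_neg_ofReal_lt_one ht)).mul_left
    (cexp (-(d * t))) using 1
  funext n
  rw [← exp_nat_mul, ← exp_add]
  congr 1
  ring

theorem norm_hurwitzKernel_le {t : ℝ} (ht : 1 < t) :
    ‖hurwitzKernel d t‖ ≤ 2 * Real.exp (-(d.re * t)) := by
  have hexp : ‖cexp (-t)‖ ≤ 1 / 2 := by
    rw [norm_exp, neg_re, ofReal_re, Real.exp_neg, ← one_div]
    exact one_div_le_one_div_of_le two_pos (by linarith [Real.add_one_le_exp t])
  have hden : 1 / 2 ≤ ‖1 - cexp (-t)‖ := by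
    have := norm_sub_norm_le (1 : ℂ) (cexp (-t))
    rw [norm_one] at this
    linarith
  rw [hurwitzKernel, norm_div, norm_exp, neg_re, re_mul_ofReal, div_le_iff₀ (by linarith)]
  nlinarith [Real.exp_pos (-(d.re * t))]

theorem continuousOn_hurwitzKernel (d : ℂ) : ContinuousOn (hurwitzKernel d) (Ioi 0) := by
  refine ContinuousOn.div (by fun_prop) (by fun_prop) fun t ht h => ?_
  have := norm_cexp_neg_ofReal_lt_one ht
  rw [← sub_eq_zero.1 h, norm_one] at this
  exact this.false

theorem isBigO_hurwitzKernel_nhdsGT_zero (d : ℂ) :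
    hurwitzKernel d =O[𝓝[>] 0] fun t => t ^ (-1 : ℝ) := by
  have hgen : ContinuousAt (fun t : ℝ => bernoulliGen d t) 0 :=
    ((differentiableOn_bernoulliGen d).continuousOn.continuousAt
      (Metric.ball_mem_nhds _ Real.two_pi_pos)).comp_of_eq continuous_ofReal.continuousAt
        ofReal_zero
  have hinv : (fun t : ℝ => (t : ℂ)⁻¹) =O[𝓝[>] 0] fun t => t ^ (-1 : ℝ) :=
    Asymptotics.isBigO_of_le _ fun t => by rw [Real.rpow_neg_one, norm_inv, norm_inv, norm_real]
  refine (((hgen.isBigO_one ℝ).mono nhdsWithin_le_nhds).mul hinv).congr' ?_ (by simp)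
  filter_upwards [self_mem_nhdsWithin] with t ht
  have ht₀ : t ≠ 0 := ne_of_gt ht
  rw [bernoulliGen_ofReal ht₀, mul_comm, inv_mul_cancel_left₀ (ofReal_ne_zero.2 ht₀)]

theorem mellinConvergent_hurwitzKernel (hd : 0 < d.re) {s : ℂ} (hs : 1 < s.re) :
    MellinConvergent (hurwitzKernel d) s := by
  refine mellinConvergent_of_isBigO_rpow_exp hd
    ((continuousOn_hurwitzKernel d).locallyIntegrableOn measurableSet_Ioi) ?_
    (isBigO_hurwitzKernel_nhdsGT_zero d) hs
  refine Asymptotics.IsBigO.of_bound 2 ?_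
  filter_upwards [eventually_gt_atTop 1] with t ht
  rw [Real.norm_of_nonneg (Real.exp_pos _).le, neg_mul]
  exact norm_hurwitzKernel_le ht

theorem hasSum_mellin_hurwitzKernel (hd : 0 < d.re) {s : ℂ} (hs : 1 < s.re) :
    HasSum (fun n : ℕ => (n + d) ^ (-s) * Gamma s) (mellin (hurwitzKernel d) s) := by
  have hs₀ : 0 < s.re := one_pos.trans hs
  have hnd (n : ℕ) : 0 < ((n : ℂ) + d).re := by
    rw [add_re, natCast_re]
    positivity
  have hnorm (n : ℕ) : ∫ t in Ioi (0 : ℝ), t ^ (s.re - 1) * ‖cexp (-((n + d) * t))‖ =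
      1 / |(n : ℝ) + d.re| ^ s.re * Real.Gamma s.re := by
    have hpos : 0 < (n : ℝ) + d.re := by simpa using hnd n
    simp_rw [norm_exp, neg_re, re_mul_ofReal, add_re, natCast_re]
    rw [Real.integral_rpow_mul_exp_neg_mul_Ioi hs₀ hpos, abs_of_pos hpos,
      Real.div_rpow zero_le_one hpos.le, Real.one_rpow]
  simp_rw [← mellin_cexp_neg_mul hs₀ (hnd _)]
  refine hasSum_mellin_of_summable_integral_norm
    (fun n => mellinConvergent_cexp_neg_mul hs₀ (hnd n)) ?_
    fun t ht => hasSum_cexp_neg_nat_add_mul ht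
  simp_rw [hnorm]
  exact ((Real.summable_one_div_nat_add_rpow d.re s.re).2 hs).mul_right _

end Kernel

section Continuation

/-- The analytic continuation of `Γ(w) ζ(w, d)` off the integers: the Mellin integral of
`hurwitzKernel d` over `(0, 1]`, evaluated term by term, plus the one over `(1, ∞)`. -/
def gammaMulHurwitzZeta (d w : ℂ) : ℂ :=
  ∑' n : ℕ, bernoulliCoeff d n / (w + (n - 1)) + mellin ((Ioi 1).indicator (hurwitzKernel d)) w

/-- `Z` is the Hurwitz zeta function `ζ(·, d)`: the continuation of `∑ (n + d) ^ (-w)` to `ℂ ∖ {1}`.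
Mathlib's `hurwitzZeta` only covers real parameters modulo `1`. -/
structure IsHurwitzZeta (d : ℂ) (Z : ℂ → ℂ) : Prop where
  eq_tsum : ∀ w : ℂ, 1 < w.re → Z w = ∑' n : ℕ, ((n : ℂ) + d) ^ (-w)
  differentiableOn : DifferentiableOn ℂ Z {w | w ≠ 1}

variable {d : ℂ} {Z : ℂ → ℂ}

theorem mellin_hurwitzKernel (hd : 0 < d.re) {w : ℂ} (hw : 1 < w.re) :
    mellin (hurwitzKernel d) w = gammaMulHurwitzZeta d w := by
  have hpole (n : ℕ) : w.re - 1 ≤ (w + ((n : ℂ) - 1)).re := by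
    simp [sub_eq_add_neg, ← add_assoc]
  rw [gammaMulHurwitzZeta, (hasSum_mellin_indicator_Ioc (sub_pos.2 hw) hpole
    (summable_norm_bernoulliCoeff d) fun t ht => hasSum_bernoulliCoeff_mul_cpow ht).tsum_eq,
    mellin_indicator_Ioc_add_mellin_indicator_Ioi (mellinConvergent_hurwitzKernel hd hw)
      zero_le_one]

theorem IsHurwitzZeta.eq_of_one_lt_re (hZ : IsHurwitzZeta d Z) (hd : 0 < d.re) {w : ℂ}
    (hw : 1 < w.re) : Z w = (Gamma w)⁻¹ * gammaMulHurwitzZeta d w := by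
  rw [← mellin_hurwitzKernel hd hw, ← (hasSum_mellin_hurwitzKernel hd hw).tsum_eq, tsum_mul_right,
    ← hZ.eq_tsum w hw, mul_comm, mul_inv_cancel_right₀ (Gamma_ne_zero_of_re_pos (by linarith))]

theorem differentiableOn_gammaMulHurwitzZeta (hd : 0 < d.re) :
    DifferentiableOn ℂ (gammaMulHurwitzZeta d) integerComplement := by
  have hpoles : closure (range fun n : ℕ => -((n : ℂ) - 1)) ⊆ range ((↑) : ℤ → ℂ) :=
    closure_minimal (range_subset_iff.2 fun n => ⟨1 - n, by simp⟩) isClosed_range_intCast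
  have hmeas : AEStronglyMeasurable (hurwitzKernel d) (volume.restrict (Ioi 1)) :=
    ((continuousOn_hurwitzKernel d).mono (Ioi_subset_Ioi zero_le_one)).aestronglyMeasurable
      measurableSet_Ioi
  exact ((differentiableOn_tsum_div_add (summable_norm_bernoulliCoeff d)).mono
      (compl_subset_compl.2 hpoles)).add
    (differentiable_mellin_indicator_Ioi hd (fun _ => norm_hurwitzKernel_le)
      hmeas).differentiableOn

theorem IsHurwitzZeta.eq_of_mem_integerComplement (hZ : IsHurwitzZeta d Z) (hd : 0 < d.re) {w : ℂ}
    (hw : w ∈ integerComplement) : Z w = (Gamma w)⁻¹ * gammaMulHurwitzZeta d w := by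
  have hopen : IsOpen integerComplement := Complex.isOpen_compl_range_intCast
  have hconn : IsPreconnected integerComplement :=
    ((countable_range _).isPathConnected_compl_of_one_lt_rank
      (by simp)).isConnected.isPreconnected
  have hZdiff : DifferentiableOn ℂ Z integerComplement :=
    hZ.differentiableOn.mono fun z hz => integerComplement.ne_one hz
  have hbase : (2 : ℂ) + I ∈ integerComplement := by
    rintro ⟨m, hm⟩
    simpa using congrArg im hm
  refine (hZdiff.analyticOnNhd hopen).eqOn_of_preconnected_of_eventuallyEq
    ((differentiable_one_div_Gamma.differentiableOn.mul
      (differentiableOn_gammaMulHurwitzZeta hd)).analyticOnNhd hopen)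
    hconn hbase ?_ hw
  filter_upwards [(isOpen_lt continuous_const continuous_re).mem_nhds
    (show 1 < ((2 : ℂ) + I).re by simp)] with z hz
  exact hZ.eq_of_one_lt_re hd hz

theorem exists_norm_gammaMulHurwitzZeta_le {c ε R : ℝ} (hc : 0 < c) (hε : 0 < ε) (hR : 0 < R)
    (D : ℝ) : ∃ B : ℝ, ∀ d : ℂ, c ≤ d.re → ‖d‖ ≤ D → ∀ w : ℂ, w.re ≤ R →
      (∀ m : ℤ, ε ≤ ‖w - m‖) → ‖gammaMulHurwitzZeta d w‖ ≤ B := by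
  obtain ⟨M, hM⟩ := exists_norm_bernoulliCoeff_le D
  refine ⟨M * 2 / ε + 2 * ((1 / c) ^ R * Real.Gamma R), fun d hcd hdD w hwR hfar => ?_⟩
  have hseries : ‖∑' n : ℕ, bernoulliCoeff d n / (w + (n - 1))‖ ≤ M * 2 / ε := by
    refine (norm_tsum_div_add_le (summable_norm_bernoulliCoeff d) hε fun n => ?_).trans ?_
    · simpa [sub_sub_eq_add_sub, add_sub_assoc] using hfar (1 - n)
    · gcongr
      exact hasSum_le (hM d hdD) (summable_norm_bernoulliCoeff d).hasSum
        (hasSum_geometric_two.mul_left M)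
  have htail : ‖mellin ((Ioi 1).indicator (hurwitzKernel d)) w‖ ≤
      2 * ((1 / c) ^ R * Real.Gamma R) := by
    refine norm_mellin_indicator_Ioi_le hc (fun t ht => (norm_hurwitzKernel_le ht).trans ?_) hR hwR
    have : 0 ≤ t := zero_le_one.trans ht.le
    gcongr
  exact (norm_add_le _ _).trans (add_le_add hseries htail)

theorem exists_norm_hurwitzZeta_sub_nat_le_of_far {c ε R : ℝ} (hc : 0 < c) (hε : 0 < ε)
    (hR : 1 ≤ R) (D : ℝ) :
    ∃ C : ℝ, ∀ d : ℂ, c ≤ d.re → ‖d‖ ≤ D → ∀ Z, IsHurwitzZeta d Z → ∀ s : ℂ, ‖s‖ ≤ R →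
      ∀ k : ℕ, (∀ m : ℤ, ε ≤ ‖s - k - m‖) → ‖Z (s - k)‖ ≤ C * (k ! * ((k : ℝ) + 1) ^ R) := by
  obtain ⟨M, hM⟩ := exists_norm_inv_Gamma_sub_nat_le hR
  obtain ⟨B, hB⟩ := exists_norm_gammaMulHurwitzZeta_le hc hε (one_pos.trans_le hR) D
  refine ⟨M * B, fun d hcd hdD Z hZ s hs k hfar => ?_⟩
  have hint : s - k ∈ integerComplement := by
    rintro ⟨m, hm⟩
    exact hε.not_ge (by simpa [hm] using hfar m)
  have hre : (s - k).re ≤ R := by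
    rw [sub_re, natCast_re]
    linarith [re_le_norm s, k.cast_nonneg (α := ℝ)]
  rw [hZ.eq_of_mem_integerComplement (hc.trans_le hcd) hint, norm_mul, mul_right_comm]
  exact mul_le_mul (hM s hs k) (hB d hcd hdD _ hre hfar) (norm_nonneg _)
    ((norm_nonneg _).trans (hM s hs k))

end Continuation

section Bound

theorem one_le_norm_intCast_sub_intCast {m n : ℤ} (h : m ≠ n) : 1 ≤ ‖(m : ℂ) - n‖ := by
  rw [← Int.cast_sub, norm_intCast]
  exact_mod_cast Int.one_le_abs (sub_ne_zero.2 h)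

theorem half_le_norm_sub_intCast {z : ℂ} {m : ℤ} (hz : ‖z - m‖ = 1 / 2) (n : ℤ) :
    1 / 2 ≤ ‖z - n‖ := by
  rcases eq_or_ne n m with rfl | hnm
  · exact hz.ge
  have := one_le_norm_intCast_sub_intCast hnm
  have := norm_sub_le_norm_sub_add_norm_sub (n : ℂ) z m
  rw [norm_sub_rev (n : ℂ) z] at this
  linarith

theorem norm_le_of_differentiableOn_ne_one {f : ℂ → ℂ} (hf : DifferentiableOn ℂ f {w | w ≠ 1})
    {m : ℤ} (hm : m ≠ 1) {B : ℝ} (hB : ∀ z : ℂ, ‖z - m‖ = 1 / 2 → ‖f z‖ ≤ B) {w : ℂ}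
    (hw : ‖w - m‖ ≤ 1 / 2) : ‖f w‖ ≤ B := by
  have hpole : Metric.closedBall (m : ℂ) (1 / 2) ⊆ {w | w ≠ 1} := by
    rintro _ h rfl
    have h₁ : (1 : ℝ) ≤ ‖(1 : ℂ) - m‖ := by
      simpa using one_le_norm_intCast_sub_intCast hm.symm
    linarith [mem_closedBall_iff_norm.1 h]
  refine norm_le_of_forall_mem_frontier_norm_le Metric.isBounded_ball
    ((hf.mono hpole).diffContOnCl_ball Subset.rfl) (fun z hz => hB z ?_)
    (by rwa [closure_ball _ (by norm_num), mem_closedBall_iff_norm])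
  rwa [frontier_ball _ (by norm_num), mem_sphere_iff_norm] at hz

theorem hurwitz_zeta_shift_bound_general {δ c r : ℝ} (hδ : 0 < δ) (hc : 0 < c) (hr : 0 ≤ r)
    (D : ℝ) :
    ∃ C : ℝ, ∀ d : ℂ, c ≤ d.re → ‖d‖ ≤ D → ∀ Z, IsHurwitzZeta d Z → ∀ s : ℂ, ‖s‖ ≤ r →
      ∀ k : ℕ, δ ≤ ‖s - (k + 1)‖ → ‖Z (s - k)‖ ≤ C * (k ! * ((k : ℝ) + 1) ^ (r + 1)) := by
  have hε : 0 < min δ (1 / 2) := lt_min hδ one_half_pos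
  obtain ⟨C, hC⟩ := exists_norm_hurwitzZeta_sub_nat_le_of_far hc hε (R := r + 1) (by linarith) D
  refine ⟨C, fun d hcd hdD Z hZ s hs k hpole => ?_⟩
  by_cases! hfar : ∀ m : ℤ, min δ (1 / 2) ≤ ‖s - k - m‖
  · exact hC d hcd hdD Z hZ s (by linarith) k hfar
  obtain ⟨m, hnear⟩ := hfar
  have hm : m ≠ 1 := by
    rintro rfl
    rw [Int.cast_one, sub_sub] at hnear
    exact (hnear.trans_le (min_le_left _ _)).not_ge hpole
  have hhalf : ‖s - k - m‖ < 1 / 2 := hnear.trans_le (min_le_right _ _)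
  refine norm_le_of_differentiableOn_ne_one hZ.differentiableOn hm (fun z hz => ?_) hhalf.le
  have hnorm : ‖z + k‖ ≤ r + 1 := by
    have hsplit : z + k = (z - m) - (s - k - m) + s := by ring
    have := norm_add_le ((z - m) - (s - k - m)) s
    have := norm_sub_le (z - m) (s - k - m)
    rw [hsplit]
    linarith
  simpa using hC d hcd hdD Z hZ (z + k) hnorm k fun m' => by
    simpa using Or.inr (half_le_norm_sub_intCast hz m')

end Bound

theorem one_le_exp_one_sq_div_two_pi : 1 ≤ Real.exp 1 ^ 2 / (2 * Real.pi) := by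
  rw [one_le_div Real.two_pi_pos]
  nlinarith [Real.exp_one_gt_d9, Real.pi_lt_d2]

end

/-- Uniform bound on the Hurwitz zeta function `Z(s-k)` (with `Z` the analytic continuation of
`w ↦ Σ_n (n+d)^{-w}`) for `d` in `{Re d ≥ 1/r'} ∩ {|d| ≤ r'}`, `|s| ≤ r` at distance `≥ δ` from
the positive integers, and all `k ∈ ℕ`:
`|Z(s-k)| ≤ C · (e²/2π)^k · k! · (k+1)^{r+1} · (1 + r'^{2k})` with `C = C(r, r', δ)`. -/
theorem hurwitz_zeta_shift_bound (δ : ℝ) (hδ : 0 < δ) (r : ℕ) (hr : 0 < r)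
    (r' : ℝ) (hr' : 1 < r') :
    ∃ C : ℝ, ∀ d : ℂ, 1 / r' ≤ d.re → ‖d‖ ≤ r' →
      ∀ Z : ℂ → ℂ,
        (∀ w : ℂ, 1 < w.re → Z w = ∑' n : ℕ, ((n : ℂ) + d) ^ (-w)) →
        DifferentiableOn ℂ Z {w : ℂ | w ≠ 1} →
      ∀ s : ℂ, ‖s‖ ≤ r → (∀ n : ℕ, δ ≤ ‖s - ((n : ℂ) + 1)‖) →
      ∀ k : ℕ,
        ‖Z (s - k)‖ ≤ C * (Real.exp 1 ^ 2 / (2 * Real.pi)) ^ k * (k.factorial : ℝ)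
          * ((k : ℝ) + 1) ^ (r + 1) * (1 + r' ^ (2 * k)) := by
  obtain ⟨C, hC⟩ := hurwitz_zeta_shift_bound_general hδ (one_div_pos.2 (one_pos.trans hr'))
    r.cast_nonneg r'
  refine ⟨C, fun d hdre hd Z hZsum hZdiff s hs hpole k => ?_⟩
  have hbound := hC d hdre hd Z ⟨hZsum, hZdiff⟩ s hs k (hpole k)
  have hfactor : 1 ≤ (Real.exp 1 ^ 2 / (2 * Real.pi)) ^ k * (1 + r' ^ (2 * k)) :=
    one_le_mul_of_one_le_of_one_le (one_le_pow₀ one_le_exp_one_sq_div_two_pi)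
      (le_add_of_nonneg_right (by positivity))
  calc ‖Z (s - k)‖ ≤ C * (k.factorial * ((k : ℝ) + 1) ^ ((r : ℝ) + 1)) := hbound
    _ ≤ C * (k.factorial * ((k : ℝ) + 1) ^ ((r : ℝ) + 1)) *
        ((Real.exp 1 ^ 2 / (2 * Real.pi)) ^ k * (1 + r' ^ (2 * k))) :=
      le_mul_of_one_le_right ((norm_nonneg _).trans hbound) hfactor
    _ = _ := by
      rw [← Nat.cast_succ r, Real.rpow_natCast, Nat.succ_eq_add_one]
      ring
end

section
/- Let P ≥ 1 be an integer, R = (R_1,...,R_P) nonnegative integers, d = (d_1,...,d_P) complex numbers with positive real parts, and y an integer. Then Σ_{n ∈ ℕ_0^P, |n| = y} ∏_{p=1}^P (n_p + d_p)^{R_p} + (-1)^{P-1} Σ_{n ∈ ℤ_{≤ -1}^P, |n| = y} ∏_{p=1}^P (n_p + d_p)^{R_p} = Σ_{𝒫 ⊊ [1,P]} ∏_{p ∈ 𝒫^c} R_p! · Σ_{k ∈ ℕ_0^𝒫, k' ∈ ℕ_0, |k| + k' = |R|_{𝒫^c} + |𝒫^c| - 1} ((|d| + y)^{k'}/k'!)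 · ∏_{p ∈ 𝒫} (-1)^{k_p} ζ(-R_p - k_p, d_p)/k_p!. -/
open Finset
open scoped Classical

/-!
Writing `∑ n, (n + d) ^ r * v ^ n` as a polynomial `q` in `1 / (1 - v)`, both sums over the level
`|n| = y` become the residue at `t = 0` of `e ^ (y t) ∏ q_p (1 / (1 - e ^ (-t)))`: for `y ≥ 0` it
is the coefficient of `v ^ y` in the expansion of `∏ q_p (1 / (1 - v))` at `v = 0`, for `y < 0` it
comes from the expansion at `v = ∞`. Distributing `e ^ (|d| t)` over the factors turns each of them
into `r! / t ^ (r + 1) + ∑ (-1) ^ k ζ(-r - k, d) t ^ k / k!`, and expanding the product of these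
sums over subsets gives the right-hand side.

The values of `ζ` enter through the binomial expansion of `(n + 1 + x) ^ w - (n + x) ^ w`, summed
over `n` and continued analytically in `w`. Letting `w` tend to a natural number `m` leaves
`∑ i < m, C(m, i) ζ(-i, x) = 1 / (m + 1) - x ^ m`, the recursion of the Bernoulli polynomials.
-/

namespace Faulhaber

section LevelSums

variable {ι R : Type*} [CommSemiring R]

lemma coeff_prod_mk [DecidableEq ι] (f : ι → ℕ → R) (A : Finset ι) (N : ℕ) :
    PowerSeries.coeff N (∏ p ∈ A, PowerSeries.mk (f p)) =
      ∑ n ∈ piAntidiag A N, ∏ p ∈ A, f p (n p) := by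
  simp only [PowerSeries.coeff_prod, PowerSeries.coeff_mk]
  refine sum_nbij (⇑) (fun l hl ↦ ?_) DFunLike.coe_injective.injOn (fun n hn ↦ ?_) fun _ _ ↦ rfl
  · rw [mem_finsuppAntidiag] at hl
    exact mem_piAntidiag.2 ⟨hl.1, fun p hp ↦ hl.2 (Finsupp.mem_support_iff.2 hp)⟩
  · rw [mem_coe, mem_piAntidiag] at hn
    exact ⟨Finsupp.onFinset A n hn.2, mem_finsuppAntidiag.2
      ⟨hn.1, Finsupp.support_onFinset_subset⟩, rfl⟩

variable [TopologicalSpace R]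

lemma tsum_level_eq_coeff_prod_mk [Fintype ι] (f : ι → ℕ → R) (N : ℕ) :
    (∑' n : ι → ℕ, if ∑ p, n p = N then ∏ p, f p (n p) else 0) =
      PowerSeries.coeff N (∏ p, PowerSeries.mk (f p)) := by
  rw [coeff_prod_mk, tsum_eq_sum (s := piAntidiag univ N)
    fun n hn ↦ if_neg fun h ↦ hn (mem_piAntidiag.2 ⟨h, fun p _ ↦ mem_univ p⟩)]
  exact sum_congr rfl fun n hn ↦ if_pos (mem_piAntidiag.1 hn).1

lemma tsum_level_eq_coeff_mk_mul_prod_mk [Fintype ι] [DecidableEq ι] (g : ℕ → R)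
    (f : ι → ℕ → R) (A : Finset ι) (N : ℕ) :
    (∑' k : (ι → ℕ) × ℕ, if (∀ p ∉ A, k.1 p = 0) ∧ ∑ p ∈ A, k.1 p + k.2 = N then
        g k.2 * ∏ p ∈ A, f p (k.1 p) else 0) =
      PowerSeries.coeff N (PowerSeries.mk g * ∏ p ∈ A, PowerSeries.mk (f p)) := by
  let level := (antidiagonal N).sigma fun ij ↦ piAntidiag A ij.2
  have mem_level (x) : x ∈ level ↔
      x.1.1 + x.1.2 = N ∧ ∑ p ∈ A, x.2 p = x.1.2 ∧ ∀ p ∉ A, x.2 p = 0 := by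
    simp only [level, mem_sigma, HasAntidiagonal.mem_antidiagonal, mem_piAntidiag, ne_eq,
      not_imp_comm]
  have injOn_level : Set.InjOn (fun x : (_ : ℕ × ℕ) × (ι → ℕ) ↦ (x.2, x.1.1)) level := by
    rintro ⟨⟨i, j⟩, k⟩ hk ⟨⟨i', j'⟩, k'⟩ hk' h
    simp only [mem_coe, mem_level, Prod.mk.injEq] at hk hk' h
    obtain ⟨rfl, rfl⟩ := h
    obtain rfl : j = j' := by omega
    rfl
  calc
    _ = ∑ x ∈ level, g x.1.1 * ∏ p ∈ A, f p (x.2 p) := by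
      rw [tsum_eq_sum (s := level.image fun x ↦ (x.2, x.1.1)), sum_image injOn_level]
      · refine sum_congr rfl fun x hx ↦ if_pos ?_
        obtain ⟨hN, hsum, hzero⟩ := (mem_level x).1 hx
        exact ⟨hzero, by simp only; omega⟩
      · rintro ⟨k, i⟩ hk
        refine if_neg fun ⟨hzero, hsum⟩ ↦ hk (mem_image.2 ⟨⟨(i, ∑ p ∈ A, k p), k⟩, ?_, rfl⟩)
        exact (mem_level _).2 ⟨by simp only at hsum ⊢; omega, rfl, hzero⟩
    _ = _ := by
      simp only [level, sum_sigma, PowerSeries.coeff_mul, PowerSeries.coeff_mk, coeff_prod_mk,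
        mul_sum]

end LevelSums

section PowerSumPoly

open Polynomial

variable {K : Type*} [CommRing K]

/-- The polynomial `q` without constant term such that `∑ n, (n + d) ^ r * v ^ n = q (1 / (1 - v))`
as a geometric-type series in `v`. In terms of `u = 1 / (1 - v)` the Euler operator `v * d/dv` is
`(u ^ 2 - u) * d/du`. -/
noncomputable def powerSumPoly (d : K) : ℕ → K[X]
  | 0 => X
  | r + 1 => C d * powerSumPoly d r + (X ^ 2 - X) * derivative (powerSumPoly d r)

lemma coeff_zero_powerSumPoly (d : K) (r : ℕ) : (powerSumPoly d r).coeff 0 = 0 := by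
  induction r with
  | zero => exact coeff_X_zero
  | succ r ih => simp [powerSumPoly, mul_coeff_zero, ih]

lemma aeval_powerSumPoly_succ {A : Type*} [CommRing A] [Algebra K A] (D : Derivation K A A) {v : A}
    (hv : D v = v ^ 2 - v) (d : K) (r : ℕ) :
    aeval v (powerSumPoly d (r + 1)) =
      d • aeval v (powerSumPoly d r) + D (aeval v (powerSumPoly d r)) := by
  rw [Derivation.map_aeval, hv, powerSumPoly]
  simp only [map_add, map_mul, map_sub, map_pow, aeval_X, aeval_C, Algebra.smul_def,
    Algebra.algebraMap_self_apply]
  ring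

end PowerSumPoly

section Geometric

open PowerSeries

variable {K : Type*} [CommRing K]

variable (K) in
/-- The Euler operator `X * d/dX` on power series. -/
noncomputable def eulerDerivation : Derivation K K⟦X⟧ K⟦X⟧ := (X : K⟦X⟧) • d⁄dX K

lemma coeff_eulerDerivation (f : K⟦X⟧) (n : ℕ) :
    coeff n (eulerDerivation K f) = n * coeff n f := by
  rw [eulerDerivation, Derivation.smul_apply, smul_eq_mul]
  cases n with
  | zero => simp
  | succ n => rw [coeff_succ_X_mul, coeff_derivative, mul_comm, Nat.cast_succ]

lemma eulerDerivation_mk_one :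
    eulerDerivation K (PowerSeries.mk 1) = (PowerSeries.mk 1) ^ 2 - PowerSeries.mk 1 := by
  ext n
  rw [coeff_eulerDerivation, map_sub, mk_one_pow_eq_mk_choose_add K 1]
  simp

lemma aeval_mk_one_powerSumPoly (d : K) (r : ℕ) :
    Polynomial.aeval (PowerSeries.mk 1 : K⟦X⟧) (powerSumPoly d r) =
      PowerSeries.mk fun n ↦ ((n : K) + d) ^ r := by
  induction r with
  | zero => ext n; simp [powerSumPoly]
  | succ r ih =>
    ext n
    rw [aeval_powerSumPoly_succ (eulerDerivation K) eulerDerivation_mk_one, ih, map_add,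
      coeff_eulerDerivation, PowerSeries.coeff_smul, coeff_mk, coeff_mk]
    ring

lemma aeval_one_sub_mk_one_powerSumPoly (d : K) (r : ℕ) :
    Polynomial.aeval (1 - PowerSeries.mk 1 : K⟦X⟧) (powerSumPoly d r) =
      -X * PowerSeries.mk fun n ↦ (-1 - (n : K) + d) ^ r := by
  induction r with
  | zero =>
    ext n
    cases n <;> simp [powerSumPoly, coeff_succ_X_mul, coeff_one]
  | succ r ih =>
    have hD : (-eulerDerivation K) (1 - PowerSeries.mk 1) =
        (1 - PowerSeries.mk 1) ^ 2 - (1 - PowerSeries.mk 1) := by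
      rw [Derivation.neg_apply, map_sub, Derivation.map_one_eq_zero, eulerDerivation_mk_one]
      ring
    ext n
    rw [aeval_powerSumPoly_succ _ hD, ih, map_add, PowerSeries.coeff_smul, Derivation.neg_apply,
      map_neg, coeff_eulerDerivation]
    cases n with
    | zero => simp
    | succ n =>
      simp only [neg_mul, map_neg, coeff_succ_X_mul, coeff_mk, smul_eq_mul]
      push_cast
      ring

end Geometric

open LaurentSeries in
/-- The coefficientwise algebra structure. The instance found by default passes through `R⟦X⟧`, and
its scalar multiplication is not definitionally the coefficientwise one. -/
noncomputable local instance laurentSeriesAlgebra {R : Type*} [CommRing R] : Algebra R R⸨X⸩ :=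
  HahnSeries.instAlgebra

section LaurentDerivation

open LaurentSeries

variable {R : Type*} [CommRing R]

lemma coeff_single_one_mul_derivative (f : R⸨X⸩) (n : ℤ) :
    (HahnSeries.single 1 1 * LaurentSeries.derivative R f).coeff n = n * f.coeff n := by
  simp [HahnSeries.coeff_single_mul]

lemma single_one_mul_derivative_mul (f g : R⸨X⸩) :
    HahnSeries.single 1 1 * LaurentSeries.derivative R (f * g) =
      f * (HahnSeries.single 1 1 * LaurentSeries.derivative R g) +
        (HahnSeries.single 1 1 * LaurentSeries.derivative R f) * g := by
  have support_subset (h : R⸨X⸩) :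
      (HahnSeries.single 1 1 * LaurentSeries.derivative R h).support ⊆ h.support := by
    intro n hn hh
    exact hn (by rw [coeff_single_one_mul_derivative, hh, mul_zero])
  ext n
  rw [coeff_single_one_mul_derivative, HahnSeries.coeff_add, HahnSeries.coeff_mul,
    HahnSeries.coeff_mul_right' g.isPWO_support (support_subset g),
    HahnSeries.coeff_mul_left' f.isPWO_support (support_subset f), mul_sum, ← sum_add_distrib]
  refine sum_congr rfl fun ij hij ↦ ?_
  rw [coeff_single_one_mul_derivative, coeff_single_one_mul_derivative,
    ← (mem_antidiagonal.1 hij).2.2]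
  push_cast
  ring

variable (R) in
/-- The derivative of Laurent series as a derivation. -/
noncomputable def laurentDerivation : Derivation R R⸨X⸩ R⸨X⸩ :=
  .mk' (LaurentSeries.derivative R) fun f g ↦ by
    have cancel_single (h : R⸨X⸩) :
        HahnSeries.single (-1) 1 * (HahnSeries.single 1 1 * h) = h := by
      rw [← mul_assoc, HahnSeries.single_mul_single]
      simp
    rw [← cancel_single (LaurentSeries.derivative R (f * g)), single_one_mul_derivative_mul]
    linear_combination f * cancel_single (LaurentSeries.derivative R g) +
      g * cancel_single (LaurentSeries.derivative R f)

lemma coeff_laurentDerivation (f : R⸨X⸩) (n : ℤ) :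
    (laurentDerivation R f).coeff n = (n + 1) * f.coeff (n + 1) := by
  change (LaurentSeries.derivative R f).coeff n = _
  simp

lemma coeff_neg_one_laurentDerivation (f : R⸨X⸩) : (laurentDerivation R f).coeff (-1) = 0 := by
  simp [coeff_laurentDerivation]

lemma laurentDerivation_single (n : ℤ) (a : R) :
    laurentDerivation R (HahnSeries.single n a) = HahnSeries.single (n - 1) (n * a) := by
  ext k
  rw [coeff_laurentDerivation]
  rcases eq_or_ne k (n - 1) with rfl | hk
  · rw [sub_add_cancel, HahnSeries.coeff_single_same, HahnSeries.coeff_single_same]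
    push_cast
    ring
  · rw [HahnSeries.coeff_single_of_ne hk, HahnSeries.coeff_single_of_ne (by omega), mul_zero]

lemma coeff_ofPowerSeries_of_neg (f : PowerSeries R) {n : ℤ} (hn : n < 0) :
    (HahnSeries.ofPowerSeries ℤ R f).coeff n = 0 :=
  (PowerSeries.coeff_coe f n).trans (if_pos hn)

lemma laurentDerivation_ofPowerSeries (f : PowerSeries R) :
    laurentDerivation R (HahnSeries.ofPowerSeries ℤ R f) =
      HahnSeries.ofPowerSeries ℤ R (PowerSeries.derivative R f) := by
  ext n
  rw [coeff_laurentDerivation]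
  rcases lt_trichotomy n (-1) with hn | rfl | hn
  · rw [coeff_ofPowerSeries_of_neg f (by omega), coeff_ofPowerSeries_of_neg _ (by omega), mul_zero]
  · rw [coeff_ofPowerSeries_of_neg _ neg_one_lt_zero]
    simp
  · lift n to ℕ using by omega
    have hf := HahnSeries.ofPowerSeries_apply_coeff (Γ := ℤ) f (n + 1)
    rw [Nat.cast_succ] at hf
    rw [HahnSeries.ofPowerSeries_apply_coeff, hf, PowerSeries.coeff_derivative, mul_comm]
    push_cast
    rfl

end LaurentDerivation

section HurwitzValue

variable {K : Type*} [Field K] [CharZero K]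

/-- The value `ζ(-m, x) = -B_{m+1}(x) / (m + 1)` of the Hurwitz zeta function. -/
noncomputable def hurwitzValue (x : K) (m : ℕ) : K :=
  -Polynomial.aeval x (Polynomial.bernoulli (m + 1)) / (m + 1)

lemma sum_choose_mul_hurwitzValue (x : K) (m : ℕ) :
    ∑ i ∈ range m, m.choose i * hurwitzValue x i = 1 / (m + 1) - x ^ m := by
  have hm : (m : K) + 1 ≠ 0 := m.cast_add_one_ne_zero
  have term_eq (i : ℕ) : ((m + 1).choose (i + 1) : K) *
      Polynomial.aeval x (Polynomial.bernoulli (i + 1)) =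
        -(m + 1) * (m.choose i * hurwitzValue x i) := by
    have hi : (i : K) + 1 ≠ 0 := i.cast_add_one_ne_zero
    have hchoose : ((m : K) + 1) * m.choose i = (m + 1).choose (i + 1) * (i + 1) :=
      mod_cast Nat.add_one_mul_choose_eq m i
    rw [hurwitzValue]
    field_simp
    linear_combination -Polynomial.aeval x (Polynomial.bernoulli (i + 1)) * hchoose
  have sum_bernoulli := congrArg (Polynomial.aeval x) (Polynomial.sum_bernoulli m)
  simp only [sum_range_succ', Nat.cast_smul_eq_nsmul, nsmul_eq_mul, map_add, map_sum, map_mul,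
    map_natCast, map_one, term_eq, ← mul_sum, Polynomial.aeval_monomial, Nat.choose_zero_right,
    Nat.cast_one, Polynomial.bernoulli_zero] at sum_bernoulli
  field_simp
  linear_combination -sum_bernoulli

end HurwitzValue

section Residues

open LaurentSeries PowerSeries HahnSeries

variable {K : Type*} [Field K] [CharZero K]

/-- The Laurent series `exp (a t)` in the variable `t`. -/
noncomputable def expSeries (a : K) : K⸨X⸩ := ofPowerSeries ℤ K (rescale a (exp K))

lemma expSeries_zero : expSeries (0 : K) = 1 := by
  simp [expSeries]

lemma expSeries_add (a b : K) : expSeries (a + b) = expSeries a * expSeries b := by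
  rw [expSeries, expSeries, expSeries, ← map_mul, exp_mul_exp_eq_exp_add]

lemma expSeries_sum {ι : Type*} (s : Finset ι) (a : ι → K) :
    expSeries (∑ p ∈ s, a p) = ∏ p ∈ s, expSeries (a p) := by
  induction s using Finset.cons_induction with
  | empty => exact expSeries_zero
  | cons p s hp ih => rw [sum_cons, prod_cons, expSeries_add, ih]

lemma laurentDerivation_expSeries (a : K) :
    laurentDerivation K (expSeries a) = a • expSeries a := by
  rw [expSeries, laurentDerivation_ofPowerSeries, ← C_mul_eq_smul, ← ofPowerSeries_C, ← map_mul]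
  congr 1
  ext n
  have hn : (n : K) + 1 ≠ 0 := n.cast_add_one_ne_zero
  have hfact : (n.factorial : K) ≠ 0 := Nat.cast_ne_zero.2 n.factorial_ne_zero
  simp only [PowerSeries.coeff_derivative, coeff_rescale, coeff_exp, coeff_C_mul, map_div₀, map_one,
    map_natCast, Nat.factorial_succ, Nat.cast_mul, Nat.cast_succ, map_mul, map_add]
  field_simp
  ring

variable (K) in
/-- The Laurent series of `1 / (1 - exp (-t))` at `t = 0`. -/
noncomputable def bernoulliKernel : K⸨X⸩ := (1 - expSeries (-1))⁻¹

lemma one_sub_expSeries_ne_zero : 1 - expSeries (-1 : K) ≠ 0 := by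
  intro h
  have coeff_one_eq := congrArg (HahnSeries.coeff · ((1 : ℕ) : ℤ)) h
  simp only [expSeries, HahnSeries.coeff_sub, HahnSeries.coeff_zero, ofPowerSeries_apply_coeff,
    coeff_rescale, coeff_exp] at coeff_one_eq
  simp at coeff_one_eq

variable (K) in
lemma one_sub_expSeries_mul_bernoulliKernel : (1 - expSeries (-1)) * bernoulliKernel K = 1 :=
  mul_inv_cancel₀ one_sub_expSeries_ne_zero

lemma laurentDerivation_bernoulliKernel :
    laurentDerivation K (bernoulliKernel K) = bernoulliKernel K - bernoulliKernel K ^ 2 := by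
  have h := congrArg (laurentDerivation K) (one_sub_expSeries_mul_bernoulliKernel K)
  rw [Derivation.leibniz, map_sub, Derivation.map_one_eq_zero, laurentDerivation_expSeries] at h
  simp only [smul_eq_mul, neg_smul, one_smul, zero_sub, neg_neg] at h
  linear_combination bernoulliKernel K * h +
    (bernoulliKernel K - laurentDerivation K (bernoulliKernel K)) *
      one_sub_expSeries_mul_bernoulliKernel K

lemma rescale_neg_one_bernoulli_series (d : K) :
    rescale (-1 : K) (PowerSeries.mk fun n ↦
        Polynomial.aeval d ((1 / n.factorial : ℚ) • Polynomial.bernoulli n)) =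
      1 + X * PowerSeries.mk fun k ↦ (-1) ^ k * hurwitzValue d k / k.factorial := by
  ext n
  cases n with
  | zero => simp
  | succ n =>
    have hfact : (n.factorial : K) ≠ 0 := Nat.cast_ne_zero.2 n.factorial_ne_zero
    have hn : (n : K) + 1 ≠ 0 := n.cast_add_one_ne_zero
    rw [coeff_rescale, coeff_mk, map_add, coeff_succ_X_mul, coeff_mk, hurwitzValue, map_smul,
      Algebra.smul_def, PowerSeries.coeff_one, if_neg n.succ_ne_zero, Nat.factorial_succ]
    push_cast
    field_simp
    ring

lemma bernoulliKernel_mul_expSeries_neg (d : K) :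
    bernoulliKernel K * expSeries (-d) = HahnSeries.single (-1) 1 +
      ofPowerSeries ℤ K (PowerSeries.mk fun k ↦ (-1) ^ k * hurwitzValue d k / k.factorial) := by
  set S := PowerSeries.mk fun k ↦ (-1 : K) ^ k * hurwitzValue d k / k.factorial with hS
  have generating := congrArg (rescale (-1 : K)) (Polynomial.bernoulli_generating_function d)
  rw [map_mul, rescale_neg_one_bernoulli_series, ← hS, map_mul, map_sub, map_one, rescale_rescale,
    rescale_X, mul_neg_one, map_neg, map_one] at generating
  have laurent : (1 + HahnSeries.single 1 1 * ofPowerSeries ℤ K S) * (1 - expSeries (-1)) =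
      HahnSeries.single 1 1 * expSeries (-d) := by
    have := congrArg (ofPowerSeries ℤ K) generating
    simp only [map_mul, map_add, map_sub, map_one, map_neg, ofPowerSeries_X] at this
    rw [expSeries, expSeries]
    linear_combination -this
  have hsingle : HahnSeries.single (-1) 1 * HahnSeries.single 1 1 = (1 : K⸨X⸩) := by
    rw [HahnSeries.single_mul_single]
    simp
  linear_combination -(bernoulliKernel K * HahnSeries.single (-1) 1) * laurent -
    (bernoulliKernel K * expSeries (-d) - ofPowerSeries ℤ K S *
      (1 - expSeries (-1)) * bernoulliKernel K) * hsingle +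
    (HahnSeries.single (-1) 1 + ofPowerSeries ℤ K S) * one_sub_expSeries_mul_bernoulliKernel K

lemma aeval_bernoulliKernel_powerSumPoly_mul_expSeries_neg (d : K) (r : ℕ) :
    Polynomial.aeval (bernoulliKernel K) (powerSumPoly d r) * expSeries (-d) =
      HahnSeries.single (-((r : ℤ) + 1)) (r.factorial : K) + ofPowerSeries ℤ K
        (PowerSeries.mk fun k ↦ (-1) ^ k * hurwitzValue d (r + k) / k.factorial) := by
  induction r with
  | zero => simpa [powerSumPoly] using bernoulliKernel_mul_expSeries_neg d
  | succ r ih =>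
    have hD : (-laurentDerivation K) (bernoulliKernel K) =
        bernoulliKernel K ^ 2 - bernoulliKernel K := by
      rw [Derivation.neg_apply, laurentDerivation_bernoulliKernel, neg_sub]
    have succ_eq : Polynomial.aeval (bernoulliKernel K) (powerSumPoly d (r + 1)) * expSeries (-d) =
        -laurentDerivation K
          (Polynomial.aeval (bernoulliKernel K) (powerSumPoly d r) * expSeries (-d)) := by
      rw [aeval_powerSumPoly_succ _ hD, Derivation.leibniz, laurentDerivation_expSeries,
        Derivation.neg_apply]
      simp only [smul_eq_mul, neg_smul, mul_neg, add_mul, smul_mul_assoc, mul_smul_comm]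
      ring
    rw [succ_eq, ih, map_add, laurentDerivation_ofPowerSeries, laurentDerivation_single, neg_add,
      ← map_neg (ofPowerSeries ℤ K), ← HahnSeries.single_neg]
    congr 1
    · rw [Nat.factorial_succ]
      push_cast
      congr 1
      ring
    · congr 1
      ext k
      have hfact : (k.factorial : K) ≠ 0 := Nat.cast_ne_zero.2 k.factorial_ne_zero
      have hk : (k : K) + 1 ≠ 0 := k.cast_add_one_ne_zero
      rw [map_neg, PowerSeries.coeff_derivative, coeff_mk, coeff_mk, Nat.factorial_succ,
        add_right_comm, add_assoc r k 1]
      push_cast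
      field_simp
      ring

lemma residue_expSeries_mul_bernoulliKernel_pow (y : K) (m : ℕ) :
    (expSeries y * bernoulliKernel K ^ (m + 1)).coeff (-1) =
      (ascPochhammer K m).eval (y + 1) / m.factorial := by
  induction m with
  | zero =>
    have := bernoulliKernel_mul_expSeries_neg (-y)
    rw [neg_neg] at this
    rw [zero_add, pow_one, mul_comm, this, HahnSeries.coeff_add, HahnSeries.coeff_single_same,
      coeff_ofPowerSeries_of_neg _ neg_one_lt_zero]
    simp
  | succ m ih =>
    have hm : (m : K) + 1 ≠ 0 := m.cast_add_one_ne_zero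
    have derivative_eq :
        laurentDerivation K (expSeries y * bernoulliKernel K ^ (m + 1)) =
          (y + m + 1) • (expSeries y * bernoulliKernel K ^ (m + 1)) -
            ((m : K) + 1) • (expSeries y * bernoulliKernel K ^ (m + 1 + 1)) := by
      rw [Derivation.leibniz, Derivation.leibniz_pow, laurentDerivation_expSeries,
        laurentDerivation_bernoulliKernel, Nat.add_sub_cancel]
      simp only [smul_eq_mul, nsmul_eq_mul, ← HahnSeries.C_mul_eq_smul, map_add, map_natCast,
        map_one]
      push_cast
      ring
    have recurrence := congrArg (HahnSeries.coeff · (-1)) derivative_eq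
    simp only [coeff_neg_one_laurentDerivation, HahnSeries.coeff_sub, HahnSeries.coeff_smul,
      smul_eq_mul, ih] at recurrence
    rw [ascPochhammer_succ_eval, Nat.factorial_succ]
    push_cast
    field_simp at recurrence ⊢
    linear_combination recurrence

lemma coeff_one_sub_mk_one_pow (R : Type*) [CommRing R] (m n : ℕ) :
    coeff (n + 1) ((1 - PowerSeries.mk 1 : R⟦X⟧) ^ (m + 1)) = (-1) ^ (m + 1) * n.choose m := by
  have hgeom : (1 - PowerSeries.mk 1 : R⟦X⟧) = -1 * (X * PowerSeries.mk 1) := by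
    linear_combination -mk_one_mul_one_sub_eq_one R
  have hsign : (-1 : R⟦X⟧) ^ (m + 1) = PowerSeries.C ((-1) ^ (m + 1)) := by simp
  rw [hgeom, mul_pow, mul_pow, mk_one_pow_eq_mk_choose_add, hsign, coeff_C_mul, coeff_X_pow_mul']
  split_ifs with h
  · rw [coeff_mk, show m + (n + 1 - (m + 1)) = n by omega]
  · rw [Nat.choose_eq_zero_of_lt (by omega), Nat.cast_zero]

lemma residue_expSeries_natCast_mul_aeval {q : Polynomial K} (hq : q.coeff 0 = 0) (n : ℕ) :
    (expSeries (n : K) * Polynomial.aeval (bernoulliKernel K) q).coeff (-1) =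
      coeff n (Polynomial.aeval (PowerSeries.mk 1 : K⟦X⟧) q) := by
  rw [Polynomial.aeval_eq_sum_range, Polynomial.aeval_eq_sum_range, mul_sum, HahnSeries.coeff_sum,
    map_sum]
  refine sum_congr rfl ?_
  rintro (_ | m) -
  · simp only [hq, zero_smul, mul_zero, HahnSeries.coeff_zero, map_zero]
  have hpoch : (ascPochhammer K m).eval ((n : K) + 1) = m.factorial * (n + m).choose m := by
    rw [← Nat.cast_succ, ← ascPochhammer_eval_cast, ascPochhammer_nat_eq_ascFactorial,
      Nat.ascFactorial_eq_factorial_mul_choose, Nat.cast_mul]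
  rw [mul_smul_comm, HahnSeries.coeff_smul, residue_expSeries_mul_bernoulliKernel_pow, hpoch,
    mul_div_cancel_left₀ _ (Nat.cast_ne_zero.2 m.factorial_ne_zero), PowerSeries.coeff_smul,
    mk_one_pow_eq_mk_choose_add, coeff_mk, add_comm n m]

lemma residue_expSeries_neg_succ_mul_aeval {q : Polynomial K} (hq : q.coeff 0 = 0) (n : ℕ) :
    (expSeries (-(n + 1) : K) * Polynomial.aeval (bernoulliKernel K) q).coeff (-1) =
      -coeff (n + 1) (Polynomial.aeval (1 - PowerSeries.mk 1 : K⟦X⟧) q) := by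
  rw [Polynomial.aeval_eq_sum_range, Polynomial.aeval_eq_sum_range, mul_sum, HahnSeries.coeff_sum,
    map_sum, ← sum_neg_distrib]
  refine sum_congr rfl ?_
  rintro (_ | m) -
  · simp only [hq, zero_smul, mul_zero, HahnSeries.coeff_zero, map_zero, neg_zero]
  have hpoch : (ascPochhammer K m).eval (-(n + 1) + 1 : K) =
      m.factorial * ((-1) ^ m * n.choose m) := by
    rw [neg_add, neg_add_cancel_right, ascPochhammer_eval_neg_eq_descPochhammer,
      descPochhammer_eval_eq_descFactorial, Nat.descFactorial_eq_factorial_mul_choose, Nat.cast_mul]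
    ring
  rw [mul_smul_comm, HahnSeries.coeff_smul, residue_expSeries_mul_bernoulliKernel_pow, hpoch,
    mul_div_cancel_left₀ _ (Nat.cast_ne_zero.2 m.factorial_ne_zero), PowerSeries.coeff_smul,
    coeff_one_sub_mk_one_pow, pow_succ]
  simp only [smul_eq_mul]
  ring

lemma prod_single {ι R : Type*} [CommSemiring R] (s : Finset ι) (a : ι → ℤ) (c : ι → R) :
    ∏ p ∈ s, HahnSeries.single (a p) (c p) =
      HahnSeries.single (∑ p ∈ s, a p) (∏ p ∈ s, c p) := by
  induction s using Finset.cons_induction with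
  | empty => simp
  | cons p s hp ih => rw [prod_cons, ih, HahnSeries.single_mul_single, sum_cons, prod_cons]

lemma expSeries_eq_ofPowerSeries_mk (a : K) :
    expSeries a = ofPowerSeries ℤ K (PowerSeries.mk fun k ↦ a ^ k / k.factorial) := by
  rw [expSeries]
  congr 1
  ext k
  simp [div_eq_mul_inv]

lemma residue_mul_prod_single_add {ι R : Type*} [CommRing R] [Fintype ι] [DecidableEq ι]
    (r : ι → ℕ) (c : ι → R) (f : R⟦X⟧) (g : ι → R⟦X⟧) :
    (ofPowerSeries ℤ R f * ∏ p, (HahnSeries.single (-((r p : ℤ) + 1)) (c p) +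
        ofPowerSeries ℤ R (g p))).coeff (-1) =
      ∑ A ∈ univ.powerset.filter (fun B : Finset ι ↦ B ≠ univ),
        (∏ p ∈ Aᶜ, c p) * coeff ((∑ p ∈ Aᶜ, r p) + #Aᶜ - 1) (f * ∏ p ∈ A, g p) := by
  simp only [add_comm (HahnSeries.single _ _), prod_add, mul_sum, HahnSeries.coeff_sum, sum_filter,
    ← compl_eq_univ_sdiff]
  refine sum_congr rfl fun A _ ↦ ?_
  rw [prod_single, ← map_prod, ← mul_assoc, ← map_mul, HahnSeries.coeff_mul_single, mul_comm]
  split_ifs with hA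
  · have hcard : 0 < #Aᶜ := by rwa [card_pos, nonempty_iff_ne_empty, Ne, compl_eq_empty_iff]
    rw [← ofPowerSeries_apply_coeff (Γ := ℤ)]
    congr 2
    rw [sum_neg_distrib, sum_add_distrib, sum_const, nsmul_one, Nat.cast_sub (by omega)]
    push_cast
    ring
  · rw [not_not.1 hA, coeff_ofPowerSeries_of_neg _ (by simp), mul_zero]

lemma expSeries_mul_prod_aeval_bernoulliKernel_powerSumPoly {ι : Type*} [Fintype ι]
    (d : ι → K) (r : ι → ℕ) (y : K) :
    expSeries y * ∏ p, Polynomial.aeval (bernoulliKernel K) (powerSumPoly (d p) (r p)) =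
      ofPowerSeries ℤ K (PowerSeries.mk fun k ↦ (∑ p, d p + y) ^ k / k.factorial) *
        ∏ p, (HahnSeries.single (-((r p : ℤ) + 1)) ((r p).factorial : K) + ofPowerSeries ℤ K
          (PowerSeries.mk fun k ↦ (-1) ^ k * hurwitzValue (d p) (r p + k) / k.factorial)) := by
  simp only [← aeval_bernoulliKernel_powerSumPoly_mul_expSeries_neg,
    ← expSeries_eq_ofPowerSeries_mk]
  rw [prod_mul_distrib, ← expSeries_sum, sum_neg_distrib, mul_left_comm, ← expSeries_add,
    add_neg_cancel_comm, mul_comm]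

section LevelResidues

variable {ι : Type*} [Fintype ι]

lemma tsum_level_natCast {R : Type*} [CommRing R] [TopologicalSpace R]
    (d : ι → R) (r : ι → ℕ) (N : ℕ) :
    (∑' n : ι → ℕ, if ∑ p, (n p : ℤ) = N then ∏ p, ((n p : R) + d p) ^ r p else 0) =
      coeff N (∏ p, Polynomial.aeval (PowerSeries.mk 1 : R⟦X⟧) (powerSumPoly (d p) (r p))) := by
  simp only [aeval_mk_one_powerSumPoly, ← tsum_level_eq_coeff_prod_mk]
  norm_cast

lemma tsum_neg_level_neg_succ {R : Type*} [CommRing R] [TopologicalSpace R] [Nonempty ι]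
    (d : ι → R) (r : ι → ℕ) (N : ℕ) :
    (-1) ^ (Fintype.card ι - 1) * (∑' m : ι → ℕ,
        if ∑ p, (-1 - (m p : ℤ)) = -(N + 1) then ∏ p, (-1 - (m p : R) + d p) ^ r p else 0) =
      -coeff (N + 1)
        (∏ p, Polynomial.aeval (1 - PowerSeries.mk 1 : R⟦X⟧) (powerSumPoly (d p) (r p))) := by
  obtain ⟨c, hc⟩ := Nat.exists_eq_add_one_of_ne_zero (Fintype.card_ne_zero (α := ι))
  have sum_level (m : ι → ℕ) :
      ∑ p, (-1 - (m p : ℤ)) = -(N + 1) ↔ ∑ p, m p + c = N := by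
    rw [sum_sub_distrib, sum_const, card_univ, hc, ← Nat.cast_sum, nsmul_eq_mul]
    omega
  have prod_eq : ∏ p, (-X * PowerSeries.mk fun n ↦ (-1 - (n : R) + d p) ^ r p) =
      PowerSeries.C ((-1) ^ (c + 1)) *
        (X ^ (c + 1) * ∏ p, PowerSeries.mk fun n ↦ (-1 - (n : R) + d p) ^ r p) := by
    rw [prod_mul_distrib, prod_const, card_univ, hc, neg_pow X, mul_assoc, map_pow, map_neg,
      map_one]
  simp only [sum_level, aeval_one_sub_mk_one_powerSumPoly, prod_eq, hc]
  rw [coeff_C_mul, coeff_X_pow_mul']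
  split_ifs with h
  · rw [← tsum_level_eq_coeff_prod_mk]
    simp only [show ∀ s, s + c = N ↔ s = N + 1 - (c + 1) by omega, Nat.add_sub_cancel, pow_succ]
    ring
  · simp only [show ∀ s, s + c ≠ N by omega, if_false, tsum_zero, mul_zero, neg_zero]

variable {K : Type*} [Field K] [CharZero K] [TopologicalSpace K]

lemma level_sums_eq_residue [Nonempty ι] (d : ι → K) (r : ι → ℕ) (y : ℤ) :
    (∑' n : ι → ℕ, if ∑ p, (n p : ℤ) = y then ∏ p, ((n p : K) + d p) ^ r p else 0) +
      (-1) ^ (Fintype.card ι - 1) * (∑' m : ι → ℕ,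
        if ∑ p, (-1 - (m p : ℤ)) = y then ∏ p, (-1 - (m p : K) + d p) ^ r p else 0) =
    (expSeries (y : K) *
      ∏ p, Polynomial.aeval (bernoulliKernel K) (powerSumPoly (d p) (r p))).coeff (-1) := by
  have hq : (∏ p, powerSumPoly (d p) (r p)).coeff 0 = 0 := by
    simp [Polynomial.coeff_zero_prod, coeff_zero_powerSumPoly]
  cases y with
  | ofNat N =>
    have neg_level_ne (m : ι → ℕ) : ∑ p, (-1 - (m p : ℤ)) ≠ N :=
      ((sum_neg (fun p _ ↦ by omega) univ_nonempty).trans_le N.cast_nonneg).ne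
    simp only [Int.ofNat_eq_natCast, tsum_level_natCast, neg_level_ne, if_false, tsum_zero,
      mul_zero, add_zero, Int.cast_natCast, ← map_prod, residue_expSeries_natCast_mul_aeval hq]
  | negSucc N =>
    have level_ne (n : ι → ℕ) : ∑ p, (n p : ℤ) ≠ -(N + 1) :=
      ((sum_nonneg fun p _ ↦ (n p).cast_nonneg).trans_lt' (by omega)).ne'
    simp only [Int.negSucc_eq, tsum_neg_level_neg_succ, level_ne, if_false, tsum_zero, zero_add,
      Int.cast_neg, Int.cast_add, Int.cast_one, Int.cast_natCast, ← map_prod,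
      residue_expSeries_neg_succ_mul_aeval hq]

end LevelResidues

end Residues

section BinomialRemainder

open Complex

/-- The remainder of order `N` in the binomial expansion of `(z + 1) ^ w` in powers of `1 / z`. -/
noncomputable def binomialRemainder (N : ℕ) (z w : ℂ) : ℂ :=
  (z + 1) ^ w - ∑ j ∈ range (N + 1),
    (descPochhammer ℂ j).eval w / j.factorial * z ^ (w - j)

variable {z w : ℂ}

lemma add_ofReal_mem_slitPlane (hz : 0 < z.re) {t : ℝ} (ht : 0 ≤ t) : z + t ∈ slitPlane :=
  .inl (by simpa using add_pos_of_pos_of_nonneg hz ht)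

lemma iteratedDerivWithin_add_cpow (hz : 0 < z.re) (w : ℂ) (j : ℕ) {t : ℝ}
    (ht : t ∈ Set.Icc (0 : ℝ) 1) :
    iteratedDerivWithin j (fun t : ℝ ↦ (z + t) ^ w) (Set.Icc 0 1) t =
      (descPochhammer ℂ j).eval w * (z + t) ^ (w - j) := by
  induction j generalizing t with
  | zero => simp
  | succ j ih =>
    have hderiv : HasDerivAt (fun t : ℝ ↦ (descPochhammer ℂ j).eval w * (z + t) ^ (w - j))
        ((descPochhammer ℂ j).eval w * ((w - j) * (z + t) ^ (w - j - 1) * 1)) t :=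
      ((((hasDerivAt_id _).const_add z).cpow_const
        (add_ofReal_mem_slitPlane hz ht.1)).const_mul _).comp_ofReal
    rw [iteratedDerivWithin_succ, derivWithin_congr (fun _ ↦ ih) (ih ht),
      hderiv.hasDerivWithinAt.derivWithin (uniqueDiffOn_Icc_zero_one t ht),
      descPochhammer_succ_eval, Nat.cast_succ, sub_sub]
    ring

lemma contDiffOn_add_cpow (hz : 0 < z.re) (w : ℂ) (n : ℕ) :
    ContDiffOn ℝ n (fun t : ℝ ↦ (z + t) ^ w) (Set.Icc 0 1) := fun t ht ↦ by
  have h : AnalyticAt ℂ (fun u : ℂ ↦ (z + u) ^ w) t :=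
    (analyticAt_const.add analyticAt_id).cpow analyticAt_const (add_ofReal_mem_slitPlane hz ht.1)
  exact (h.contDiffAt.restrict_scalars ℝ |>.comp t ofRealCLM.contDiff.contDiffAt).contDiffWithinAt

lemma norm_add_cpow_le (hz : 0 < z.re) (hw : w.re ≤ 0) {t : ℝ} (ht : 0 ≤ t) :
    ‖(z + t) ^ w‖ ≤ z.re ^ w.re * Real.exp (Real.pi * |w.im|) := by
  have hre : z.re ≤ ‖z + t‖ := (le_add_of_nonneg_right ht).trans (by simpa using re_le_norm (z + t))
  calc
    ‖(z + t) ^ w‖ ≤ ‖z + t‖ ^ w.re * Real.exp (-((z + t).arg * w.im)) := by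
      rw [Real.exp_neg, ← div_eq_mul_inv]
      exact norm_cpow_le _ _
    _ ≤ z.re ^ w.re * Real.exp (Real.pi * |w.im|) := by
      gcongr ?_ * Real.exp ?_
      · exact Real.rpow_le_rpow_of_nonpos hz hre hw
      · exact (neg_le_abs _).trans (by rw [abs_mul]; gcongr; exact abs_arg_le_pi _)

lemma norm_binomialRemainder_le (N : ℕ) (hz : 0 < z.re) (hw : w.re ≤ N + 1) :
    ‖binomialRemainder N z w‖ ≤ ‖(descPochhammer ℂ (N + 1)).eval w‖ / N.factorial *
      (z.re ^ (w.re - (N + 1)) * Real.exp (Real.pi * |w.im|)) := by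
  have taylor := taylor_mean_remainder_bound zero_le_one
    (contDiffOn_add_cpow hz w (N + 1)) (Set.right_mem_Icc.2 zero_le_one)
    (C := ‖(descPochhammer ℂ (N + 1)).eval w‖ *
      (z.re ^ (w.re - (N + 1)) * Real.exp (Real.pi * |w.im|))) fun t ht ↦ by
      rw [iteratedDerivWithin_add_cpow hz w _ ht, norm_mul]
      gcongr
      simpa using norm_add_cpow_le (w := w - (N + 1 : ℕ)) hz (by simpa using hw) ht.1
  have remainder_eq : binomialRemainder N z w = (fun t : ℝ ↦ (z + t) ^ w) 1 -
      taylorWithinEval (fun t : ℝ ↦ (z + t) ^ w) N (Set.Icc 0 1) 0 1 := by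
    rw [taylor_within_apply, binomialRemainder]
    simp only [iteratedDerivWithin_add_cpow hz w _ (Set.left_mem_Icc.2 zero_le_one), sub_zero,
      one_pow, mul_one, real_smul, ofReal_zero, add_zero, ofReal_one, ofReal_inv, ofReal_natCast]
    congr! 2
    ring
  rw [remainder_eq]
  exact taylor.trans_eq (by ring)

lemma differentiable_binomialRemainder (N : ℕ) (hz : 0 < z.re) :
    Differentiable ℂ (binomialRemainder N z) := by
  have hz0 : z ≠ 0 := ne_of_apply_ne re hz.ne'
  have hz1 : z + 1 ≠ 0 := slitPlane_ne_zero <| by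
    simpa only [ofReal_one] using add_ofReal_mem_slitPlane hz zero_le_one
  intro w
  unfold binomialRemainder
  refine .sub (differentiableAt_id.const_cpow (.inl hz1)) (.fun_sum fun j _ ↦ .mul ?_ ?_)
  · exact ((descPochhammer ℂ j).differentiable w).div_const _
  · exact (differentiableAt_id.sub_const _).const_cpow (.inl hz0)

lemma binomialRemainder_natCast (z : ℂ) {N m : ℕ} (hm : m ≤ N) : binomialRemainder N z m = 0 := by
  rw [binomialRemainder, cpow_natCast, add_comm z, add_pow, sub_eq_zero]
  simp only [← Nat.cast_choose_eq_descPochhammer_div, one_pow, one_mul]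
  refine (sum_congr rfl fun j hj ↦ ?_).trans
    (sum_subset (range_mono (Nat.succ_le_succ hm)) fun j _ hj ↦ ?_)
  · rw [← Nat.cast_sub (mem_range_succ_iff.1 hj), cpow_natCast, mul_comm]
  · rw [Nat.choose_eq_zero_of_lt (by simpa using hj), Nat.cast_zero, zero_mul]

end BinomialRemainder

section HurwitzContinuation

open Complex Topology Filter

variable {x : ℂ}

lemma rpow_le_rpow_add_rpow {a b c t : ℝ} (ht : 0 < t) (hab : a ≤ b) (hbc : b ≤ c) :
    t ^ b ≤ t ^ a + t ^ c := by
  rcases le_total t 1 with ht1 | ht1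
  · exact (Real.rpow_le_rpow_of_exponent_ge ht ht1 hab).trans
      (le_add_of_nonneg_right (Real.rpow_nonneg ht.le c))
  · exact (Real.rpow_le_rpow_of_exponent_le ht1 hbc).trans
      (le_add_of_nonneg_left (Real.rpow_nonneg ht.le a))

lemma re_natCast_add_pos (hx : 0 < x.re) (n : ℕ) : 0 < (n + x).re := by
  simpa using add_pos_of_nonneg_of_pos n.cast_nonneg hx

lemma summable_re_natCast_add_rpow (hx : 0 < x.re) {a : ℝ} (ha : a < -1) :
    Summable fun n : ℕ ↦ (n + x).re ^ a := by
  refine ((Real.summable_one_div_nat_add_rpow x.re (-a)).2 (by linarith)).congr fun n ↦ ?_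
  have hn := re_natCast_add_pos hx n
  rw [add_re, natCast_re] at hn ⊢
  rw [abs_of_pos hn, Real.rpow_neg hn.le, one_div, inv_inv]

lemma summable_natCast_add_cpow (hx : 0 < x.re) {w : ℂ} (hw : w.re < -1) :
    Summable fun n : ℕ ↦ (n + x) ^ w := by
  refine ((summable_re_natCast_add_rpow hx hw).mul_right
    (Real.exp (Real.pi * |w.im|))).of_norm_bounded fun n ↦ ?_
  simpa using norm_add_cpow_le (w := w) (re_natCast_add_pos hx n) (by linarith) le_rfl

lemma differentiableOn_tsum_binomialRemainder (hx : 0 < x.re) (N : ℕ) :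
    DifferentiableOn ℂ (fun w ↦ ∑' n : ℕ, binomialRemainder N (n + x) w) {w | w.re < N} := by
  intro w₀ (hw₀ : w₀.re < N)
  obtain ⟨δ, hδ, hδN⟩ : ∃ δ > 0, w₀.re + δ < N :=
    ⟨(N - w₀.re) / 2, half_pos (sub_pos.2 hw₀), by linarith⟩
  obtain ⟨C, hC⟩ := (isCompact_closedBall w₀ δ).exists_bound_of_continuousOn (f := fun w ↦
    ‖(descPochhammer ℂ (N + 1)).eval w‖ / N.factorial * Real.exp (Real.pi * |w.im|)) (by fun_prop)
  have bound (n : ℕ) (w : ℂ) (hw : w ∈ Metric.ball w₀ δ) : ‖binomialRemainder N (n + x) w‖ ≤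
      C * ((n + x).re ^ (w₀.re - δ - (N + 1)) + (n + x).re ^ (w₀.re + δ - (N + 1))) := by
    obtain ⟨hre, hre'⟩ := abs_lt.1
      ((abs_re_le_norm (w - w₀)).trans_lt (mem_ball_iff_norm.1 hw))
    rw [sub_re] at hre hre'
    have hCw := (le_abs_self _).trans (hC w (Metric.ball_subset_closedBall hw))
    refine (norm_binomialRemainder_le N (re_natCast_add_pos hx n) (by linarith)).trans ?_
    rw [mul_comm (_ ^ _), ← mul_assoc]
    exact mul_le_mul hCw
      (rpow_le_rpow_add_rpow (re_natCast_add_pos hx n) (by linarith) (by linarith))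
      (Real.rpow_nonneg (re_natCast_add_pos hx n).le _) (hCw.trans' (by positivity))
  have differentiableOn_ball := differentiableOn_tsum_of_summable_norm
    (((summable_re_natCast_add_rpow hx (by linarith)).add
      (summable_re_natCast_add_rpow hx (by linarith))).mul_left C)
    (fun n ↦ (differentiable_binomialRemainder N (re_natCast_add_pos hx n)).differentiableOn)
    Metric.isOpen_ball bound
  exact (differentiableOn_ball.differentiableAt (Metric.ball_mem_nhds w₀ hδ)).differentiableWithinAt

lemma tsum_binomialRemainder_of_re_lt (hx : 0 < x.re) (N : ℕ) {w : ℂ} (hw : w.re < -1) :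
    ∑' n : ℕ, binomialRemainder N (n + x) w = -x ^ w - ∑ j ∈ range N,
      (descPochhammer ℂ (j + 1)).eval w / (j + 1).factorial *
        ∑' n : ℕ, (n + x) ^ (w - (j + 1)) := by
  have summable_sub (j : ℕ) : Summable fun n : ℕ ↦ (n + x) ^ (w - j) :=
    summable_natCast_add_cpow hx (by
      rw [sub_re, natCast_re]
      linarith [j.cast_nonneg (α := ℝ)])
  have summable_terms (j : ℕ) := (summable_sub j).mul_left
    ((descPochhammer ℂ j).eval w / j.factorial)
  have summable_zero : Summable fun n : ℕ ↦ (n + x) ^ w := summable_natCast_add_cpow hx hw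
  have summable_succ : Summable fun n : ℕ ↦ (n + x + 1) ^ w :=
    ((summable_nat_add_iff 1).2 summable_zero).congr fun n ↦ by
      rw [Nat.cast_succ, add_right_comm]
  have tsum_succ : ∑' n : ℕ, (n + x + 1) ^ w = ∑' n : ℕ, (n + x) ^ w - x ^ w := by
    rw [summable_zero.tsum_eq_zero_add, Nat.cast_zero, zero_add, add_sub_cancel_left]
    simp only [Nat.cast_succ, add_right_comm]
  simp only [binomialRemainder]
  rw [summable_succ.tsum_sub (summable_sum fun j _ ↦ summable_terms j),
    Summable.tsum_finsetSum fun j _ ↦ summable_terms j, tsum_succ, sum_range_succ']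
  simp only [tsum_mul_left, Nat.cast_succ, descPochhammer_zero, Polynomial.eval_one,
    Nat.factorial_zero, Nat.cast_zero, sub_zero]
  ring

/-- `z` is the analytic continuation `s ↦ ζ(s, x)` of the Hurwitz zeta function to `s ≠ 1`. -/
structure IsHurwitzZeta (x : ℂ) (z : ℂ → ℂ) : Prop where
  re_pos : 0 < x.re
  eq_tsum : ∀ s : ℂ, 1 < s.re → z s = ∑' n : ℕ, (n + x) ^ (-s)
  differentiableOn : DifferentiableOn ℂ z {s | s ≠ 1}

variable {z : ℂ → ℂ}

lemma IsHurwitzZeta.ne_zero (hz : IsHurwitzZeta x z) : x ≠ 0 :=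
  ne_of_apply_ne re hz.re_pos.ne'

lemma differentiableAt_binomial_mul (hz : IsHurwitzZeta x z) {j : ℕ} {w : ℂ} (hw : w ≠ j) :
    DifferentiableAt ℂ
      (fun w ↦ (descPochhammer ℂ (j + 1)).eval w / (j + 1).factorial * z (j + 1 - w)) w := by
  have hw' : (j : ℂ) + 1 - w ≠ 1 := by
    rw [add_sub_right_comm, Ne, add_eq_right, sub_eq_zero]
    exact hw.symm
  exact ((descPochhammer ℂ (j + 1)).differentiableAt.div_const _).mul <|
    DifferentiableAt.comp (f := fun w : ℂ ↦ (j : ℂ) + 1 - w) w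
      (hz.differentiableOn.differentiableAt (isOpen_ne.mem_nhds hw')) (by fun_prop)

lemma tsum_binomialRemainder_eq (hz : IsHurwitzZeta x z) (N : ℕ) {w : ℂ} (hw : w.re < N)
    (hw' : 0 < w.im) :
    ∑' n : ℕ, binomialRemainder N (n + x) w = -x ^ w - ∑ j ∈ range N,
      (descPochhammer ℂ (j + 1)).eval w / (j + 1).factorial * z (j + 1 - w) := by
  let U : Set ℂ := {w | w.re < N} ∩ {w | 0 < w.im}
  have isOpen_U : IsOpen U :=
    (isOpen_lt continuous_re continuous_const).inter (isOpen_lt continuous_const continuous_im)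
  have preconnected_U : IsPreconnected U :=
    ((convex_halfSpace_re_lt _).inter (convex_halfSpace_im_gt _)).isPreconnected
  have differentiableOn_rhs : DifferentiableOn ℂ (fun w ↦ -x ^ w - ∑ j ∈ range N,
      (descPochhammer ℂ (j + 1)).eval w / (j + 1).factorial * z (j + 1 - w)) U := fun w hw ↦
    ((differentiableAt_id.const_cpow (.inl hz.ne_zero)).neg.sub (.fun_sum fun j _ ↦
      differentiableAt_binomial_mul hz
        (ne_of_apply_ne im (by simpa using hw.2.ne')))).differentiableWithinAt
  have eventually_eq : ∀ᶠ w in 𝓝 (-2 + I), ∑' n : ℕ, binomialRemainder N (n + x) w =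
      -x ^ w - ∑ j ∈ range N,
        (descPochhammer ℂ (j + 1)).eval w / (j + 1).factorial * z (j + 1 - w) := by
    filter_upwards [(isOpen_lt continuous_re continuous_const).mem_nhds
      (show (-2 + I).re < -1 by simp)] with w (hw : w.re < -1)
    rw [tsum_binomialRemainder_of_re_lt hz.re_pos N hw]
    congr! 3 with j
    have one_lt_re : 1 < ((j : ℂ) + 1 - w).re := by
      simp only [sub_re, add_re, natCast_re, one_re]
      linarith [j.cast_nonneg (α := ℝ)]
    rw [hz.eq_tsum _ one_lt_re]
    simp only [neg_sub]
  have base_mem : -2 + I ∈ U :=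
    ⟨(show (-2 + I).re < 0 by simp).trans_le N.cast_nonneg, show 0 < (-2 + I).im by simp⟩
  have differentiableOn_lhs := (differentiableOn_tsum_binomialRemainder hz.re_pos N).mono
    (Set.inter_subset_left : U ⊆ _)
  exact (differentiableOn_lhs.analyticOnNhd isOpen_U).eqOn_of_preconnected_of_eventuallyEq
    (differentiableOn_rhs.analyticOnNhd isOpen_U) preconnected_U base_mem eventually_eq ⟨hw, hw'⟩

lemma sum_choose_succ_mul_reflect (f : ℂ → ℂ) (m : ℕ) :
    ∑ j ∈ range m, (m.choose (j + 1) : ℂ) * f (j + 1 - m) =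
      ∑ i ∈ range m, m.choose i * f (-i) := by
  rw [← sum_range_reflect]
  refine sum_congr rfl fun i hi ↦ ?_
  have him := mem_range.1 hi
  have hsucc : m - 1 - i + 1 = m - i := by omega
  rw [← Nat.cast_add_one, hsucc, Nat.choose_symm him.le, Nat.cast_sub him.le, sub_sub_cancel_left]

lemma tendsto_binomial_mul (hz : IsHurwitzZeta x z) (m : ℕ) :
    Tendsto (fun w : ℂ ↦ (descPochhammer ℂ (m + 1)).eval w / (m + 1).factorial * z (m + 1 - w))
      (𝓝[{w | 0 < w.im}] m)
      (𝓝 (-x ^ m - ∑ i ∈ range m, m.choose i * z (-i))) := by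
  have hm : {w : ℂ | w.re < (m + 1 : ℕ)} ∈ 𝓝 (m : ℂ) :=
    (isOpen_lt continuous_re continuous_const).mem_nhds (by simp)
  have continuousAt_combination : ContinuousAt (fun w : ℂ ↦
      -x ^ w - ∑' n : ℕ, binomialRemainder (m + 1) (n + x) w - ∑ j ∈ range m,
        (descPochhammer ℂ (j + 1)).eval w / (j + 1).factorial * z (j + 1 - w)) m :=
    ((continuousAt_const_cpow hz.ne_zero).neg.sub
      ((differentiableOn_tsum_binomialRemainder hz.re_pos (m + 1)).differentiableAt
        hm).continuousAt).sub
      (tendsto_finsetSum _ fun j hj ↦ (differentiableAt_binomial_mul hz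
        (Nat.cast_injective.ne (mem_range.1 hj).ne')).continuousAt)
  have limit := continuousAt_combination.tendsto.mono_left
    (nhdsWithin_le_nhds (s := {w | 0 < w.im}))
  simp only [binomialRemainder_natCast _ m.le_succ, tsum_zero, sub_zero, cpow_natCast,
    ← Nat.cast_choose_eq_descPochhammer_div, sum_choose_succ_mul_reflect] at limit
  refine limit.congr' ?_
  filter_upwards [nhdsWithin_le_nhds hm, self_mem_nhdsWithin] with w hw hw'
  rw [tsum_binomialRemainder_eq hz (m + 1) hw hw', sum_range_succ]
  ring

lemma tendsto_mul_one_sub (hz : IsHurwitzZeta x z) :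
    Tendsto (fun v : ℂ ↦ v * z (1 - v)) (𝓝[{v | 0 < v.im}] 0) (𝓝 (-1)) := by
  simpa using tendsto_binomial_mul hz 0

lemma sum_choose_mul_neg (hz : IsHurwitzZeta x z) (m : ℕ) :
    ∑ i ∈ range m, m.choose i * z (-i) = 1 / (m + 1) - x ^ m := by
  have neBot : (𝓝[{w : ℂ | 0 < w.im}] (m : ℂ)).NeBot := by
    rw [← mem_closure_iff_nhdsWithin_neBot, closure_setOfPred_lt_im]
    simp
  have tendsto_sub : Tendsto (fun w : ℂ ↦ w - m) (𝓝[{w | 0 < w.im}] m)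
      (𝓝[{v | 0 < v.im}] 0) := by
    refine tendsto_nhdsWithin_iff.2 ⟨?_, ?_⟩
    · exact ((continuous_id.sub continuous_const).tendsto' _ _ (sub_self _)).mono_left
        nhdsWithin_le_nhds
    · filter_upwards [self_mem_nhdsWithin] with w hw
      simpa using hw
  have tendsto_pole := ((((descPochhammer ℂ m).continuous.tendsto (m : ℂ)).mono_left
    nhdsWithin_le_nhds).div_const ((m + 1).factorial : ℂ)).mul
      ((tendsto_mul_one_sub hz).comp tendsto_sub)
  have limit_eq := tendsto_nhds_unique (tendsto_binomial_mul hz m)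
    (tendsto_pole.congr fun w ↦ by
      rw [Function.comp_apply, descPochhammer_succ_eval, sub_sub_eq_add_sub, add_comm 1]
      ring)
  have hfact : (m.factorial : ℂ) ≠ 0 := Nat.cast_ne_zero.2 m.factorial_ne_zero
  have hm : (m : ℂ) + 1 ≠ 0 := m.cast_add_one_ne_zero
  rw [descPochhammer_eval_eq_descFactorial, Nat.descFactorial_self, Nat.factorial_succ] at limit_eq
  push_cast at limit_eq
  field_simp at limit_eq ⊢
  linear_combination -limit_eq

end HurwitzContinuation

lemma IsHurwitzZeta.apply_neg_natCast {x : ℂ} {z : ℂ → ℂ} (hz : IsHurwitzZeta x z) (k : ℕ) :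
    z (-k) = hurwitzValue x k := by
  induction k using Nat.strong_induction_on with
  | _ k ih =>
    have recurrence := (sum_choose_mul_neg hz (k + 1)).trans
      (sum_choose_mul_hurwitzValue x (k + 1)).symm
    rw [sum_range_succ, sum_range_succ, sum_congr rfl fun i hi ↦ by rw [ih i (mem_range.1 hi)],
      add_right_inj, Nat.choose_succ_self_right] at recurrence
    exact mul_left_cancel₀ (Nat.cast_ne_zero.2 k.succ_ne_zero) recurrence

end Faulhaber

open Faulhaber in
theorem generalized_faulhaber_identity_general {ι K : Type*} [Fintype ι] [DecidableEq ι]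
    [Nonempty ι] [Field K] [CharZero K] [TopologicalSpace K] (R : ι → ℕ) (d : ι → K) (y : ℤ) :
    (∑' n : ι → ℕ, if ∑ p, (n p : ℤ) = y then ∏ p, ((n p : K) + d p) ^ R p else 0) +
      (-1) ^ (Fintype.card ι - 1) * (∑' m : ι → ℕ,
        if ∑ p, (-1 - (m p : ℤ)) = y then ∏ p, (-1 - (m p : K) + d p) ^ R p else 0) =
    ∑ A ∈ univ.powerset.filter (fun B : Finset ι ↦ B ≠ univ), (∏ p ∈ Aᶜ, ((R p).factorial : K)) *
      ∑' k : (ι → ℕ) × ℕ,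
        if (∀ p ∉ A, k.1 p = 0) ∧ ∑ p ∈ A, k.1 p + k.2 = ∑ p ∈ Aᶜ, R p + #Aᶜ - 1 then
          (∑ p, d p + y) ^ k.2 / k.2.factorial *
            ∏ p ∈ A, (-1) ^ k.1 p * hurwitzValue (d p) (R p + k.1 p) / (k.1 p).factorial
        else 0 := by
  rw [level_sums_eq_residue, expSeries_mul_prod_aeval_bernoulliKernel_powerSumPoly,
    residue_mul_prod_single_add]
  simp only [← tsum_level_eq_coeff_mk_mul_prod_mk]

/-- Onodera's generalized Faulhaber-type identity. `Z d` denotes the analytic continuation in `s`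
of the Hurwitz zeta function `Σ_n (n+d)^{-s}` for `Re d > 0`. For any integer `y`,
`Σ_{n ∈ ℕ^P, |n|=y} ∏_p (n_p+d_p)^{R_p} + (-1)^{P-1} Σ_{n ∈ ℤ_{≤-1}^P, |n|=y} ∏_p (n_p+d_p)^{R_p}`
equals
`Σ_{A ⊊ [1,P]} ∏_{p∈Aᶜ} R_p! Σ_{k∈ℕ^A, k', |k|+k' = |R|_{Aᶜ}+|Aᶜ|-1}
  ((|d|+y)^{k'}/k'!) ∏_{p∈A} (-1)^{k_p} ζ(-R_p-k_p, d_p)/k_p!`. -/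
theorem generalized_faulhaber_identity (P : ℕ) (hP : 1 ≤ P)
    (R : Fin P → ℕ) (d : Fin P → ℂ) (hd : ∀ p, 0 < (d p).re) (y : ℤ)
    (Z : ℂ → ℂ → ℂ)
    (hZ1 : ∀ x : ℂ, 0 < x.re → ∀ s : ℂ, 1 < s.re → Z x s = ∑' n : ℕ, ((n : ℂ) + x) ^ (-s))
    (hZ2 : ∀ x : ℂ, 0 < x.re → DifferentiableOn ℂ (Z x) {s : ℂ | s ≠ 1}) :
    (∑' n : Fin P → ℕ,
        if (∑ p, (n p : ℤ)) = y then ∏ p, ((n p : ℂ) + d p) ^ (R p) else 0)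
      + (-1 : ℂ) ^ (P - 1) * (∑' m : Fin P → ℕ,
        if (∑ p, (-1 - (m p : ℤ))) = y then ∏ p, ((-1 : ℂ) - (m p : ℕ) + d p) ^ (R p) else 0)
    = ∑ A ∈ (Finset.univ : Finset (Fin P)).powerset.filter (fun B => B ≠ Finset.univ),
        (∏ p ∈ Aᶜ, ((R p).factorial : ℂ)) *
        ∑' kk : (Fin P → ℕ) × ℕ,
          if (∀ p ∉ A, kk.1 p = 0) ∧
              (∑ p ∈ A, kk.1 p) + kk.2 = (∑ p ∈ Aᶜ, R p) + Aᶜ.card - 1 then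
            ((∑ p, d p) + (y : ℂ)) ^ kk.2 / (kk.2.factorial : ℂ) *
              ∏ p ∈ A, (-1 : ℂ) ^ (kk.1 p) * Z (d p) (-(R p : ℂ) - (kk.1 p : ℂ))
                / ((kk.1 p).factorial : ℂ)
          else 0 := by
  have : Nonempty (Fin P) := ⟨⟨0, hP⟩⟩
  have hZ (p : Fin P) (k : ℕ) :
      Z (d p) (-(R p : ℂ) - k) = Faulhaber.hurwitzValue (d p) (R p + k) := by
    rw [← neg_add', ← Nat.cast_add]
    exact Faulhaber.IsHurwitzZeta.apply_neg_natCast ⟨hd p, hZ1 _ (hd p), hZ2 _ (hd p)⟩ _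
  have general := generalized_faulhaber_identity_general R d y
  rw [Fintype.card_fin] at general
  simp only [hZ]
  -- The two sides decide `∀ p ∉ A, k p = 0` by different instances.
  exact general.trans (by congr! 6)
end
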